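/- arXiv:1702.04228 — 6 statements merged into one kernel-verified Lean document; each statement's English description precedes it below -/
import Mathlib

section
/- Theorem 1 (degree theorem, connected case): if the (D+1)-colored graph encoded by σ is connected, i.e. C(σ) = 1, then there exists a nonnegative integer ω (the degree of σ) such that 2·ω = (D−1)! · ( D(D−1)/2 · k + D − F(σ) ). In particular F(σ) ≤ D(D−1)/2 · k + D. -/
/-- Number of cycles of a permutation counting fixed points: the number of orbits
on `Fin k` of the cyclic group generated by `τ`. -/
noncomputable def cycleCount {k : ℕ} (τ : Equiv.Perm (Fin k)) : ℕ :=
  Nat.card (MulAction.orbitRel.Quotient (Subgroup.zpowers τ) (Fin k))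

/-- Total number of faces of the `(D+1)`-colored graph encoded by `σ`:
`F(σ) = Σ_{c₁ < c₂} c(σ⁽ᶜ¹⁾ ∘ (σ⁽ᶜ²⁾)⁻¹)`. -/
noncomputable def faceCount {k D : ℕ} (σ : Fin (D + 1) → Equiv.Perm (Fin k)) : ℕ :=
  ∑ p ∈ Finset.univ.filter (fun p : Fin (D + 1) × Fin (D + 1) => p.1 < p.2),
    cycleCount (σ p.1 * (σ p.2)⁻¹)

/-- Number of connected components of the `(D+1)`-colored graph encoded by `σ`:
the number of orbits on `Fin k` of the subgroup generated by `(σ⁽⁰⁾)⁻¹ ∘ σ⁽ᶜ⁾`, `1 ≤ c ≤ D`. -/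
noncomputable def compCount {k D : ℕ} (σ : Fin (D + 1) → Equiv.Perm (Fin k)) : ℕ :=
  Nat.card (MulAction.orbitRel.Quotient
    (Subgroup.closure
      {g : Equiv.Perm (Fin k) | ∃ c : Fin (D + 1), c ≠ 0 ∧ g = (σ 0)⁻¹ * σ c}) (Fin k))

/-- Two points lie in the same orbit of `⟨τ⟩` exactly when they lie in the same cycle of `τ`. -/
theorem orbitRel_zpowers_iff_sameCycle {α : Type*} (τ : Equiv.Perm α) (x y : α) :
    MulAction.orbitRel (Subgroup.zpowers τ) α x y ↔ τ.SameCycle x y := by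
  rw [MulAction.orbitRel_apply, Equiv.Perm.sameCycle_comm]
  constructor
  · rintro ⟨⟨_, n, rfl⟩, h⟩
    exact ⟨n, h⟩
  · rintro ⟨n, h⟩
    exact ⟨⟨τ ^ n, n, rfl⟩, h⟩

/-- The orbits of `⟨τ⟩` are the fixed points of `τ` and its nontrivial cycles. -/
theorem cycleCount_eq_card_compl_support_add {k : ℕ} (τ : Equiv.Perm (Fin k)) :
    cycleCount τ = (τ.supportᶜ).card + τ.cycleFactorsFinset.card := by
  classical
  let g : Fin k → Fin k ⊕ Equiv.Perm (Fin k) :=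
    fun x => if τ x = x then Sum.inl x else Sum.inr (τ.cycleOf x)
  have hg : ∀ x y, g x = g y ↔ τ.SameCycle x y := by
    intro x y
    by_cases hx : τ x = x <;> by_cases hy : τ y = y
    · simp only [g, hx, hy, if_true, Sum.inl.injEq]
      exact ⟨fun h => h ▸ .refl _ _, fun h => h.eq_of_left hx⟩
    · simp only [g, hx, hy, if_true, if_false, reduceCtorEq, false_iff]
      exact fun h => hy (h.apply_eq_self_iff.1 hx)
    · simp only [g, hx, hy, if_true, if_false, reduceCtorEq, false_iff]
      exact fun h => hx (h.apply_eq_self_iff.2 hy)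
    · simp only [g, hx, hy, if_false, Sum.inr.injEq]
      exact (Equiv.Perm.sameCycle_iff_cycleOf_eq_of_mem_support
        (Equiv.Perm.mem_support.2 hx) (Equiv.Perm.mem_support.2 hy)).symm
  let G : MulAction.orbitRel.Quotient (Subgroup.zpowers τ) (Fin k) →
      Fin k ⊕ Equiv.Perm (Fin k) :=
    Quotient.lift g fun x y h => (hg x y).2 ((orbitRel_zpowers_iff_sameCycle τ x y).1 h)
  have hG : Function.Injective G := by
    intro p q
    induction p using Quotient.inductionOn
    induction q using Quotient.inductionOn
    exact fun h => Quotient.sound ((orbitRel_zpowers_iff_sameCycle τ _ _).2 ((hg _ _).1 h))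
  have hrange : Set.range G = ↑((τ.supportᶜ).disjSum τ.cycleFactorsFinset) := by
    have hGg : Set.range G = Set.range g := Set.range_quot_lift _
    rw [hGg]
    ext (x | c)
    · simp only [Set.mem_range, Finset.mem_coe, Finset.inl_mem_disjSum, Finset.mem_compl,
        Equiv.Perm.mem_support, not_not, g]
      constructor
      · rintro ⟨y, hy⟩
        split_ifs at hy with h
        exact Sum.inl_injective hy ▸ h
      · exact fun h => ⟨x, if_pos h⟩
    · simp only [Set.mem_range, Finset.mem_coe, Finset.inr_mem_disjSum, g]
      constructor
      · rintro ⟨y, hy⟩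
        split_ifs at hy with h
        rw [← Sum.inr_injective hy, Equiv.Perm.cycleOf_mem_cycleFactorsFinset_iff,
          Equiv.Perm.mem_support]
        exact h
      · intro hc
        obtain ⟨y, hy⟩ := (Equiv.Perm.mem_cycleFactorsFinset_iff.1 hc).1.nonempty_support
        have hcy := Equiv.Perm.cycle_is_cycleOf hy hc
        have hτy := Equiv.Perm.mem_support.1 (Equiv.Perm.mem_cycleFactorsFinset_support_le hc hy)
        exact ⟨y, by rw [if_neg hτy, hcy]⟩
  rw [cycleCount, ← Nat.card_range_of_injective hG, hrange, Nat.card_coe_set_eq,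
    Set.ncard_coe_finset, Finset.card_disjSum]

theorem sign_eq_neg_one_pow_add_cycleCount {k : ℕ} (τ : Equiv.Perm (Fin k)) :
    Equiv.Perm.sign τ = (-1) ^ (k + cycleCount τ) := by
  have hcard : Multiset.card τ.cycleType = τ.cycleFactorsFinset.card := by
    simp [Equiv.Perm.cycleType_def]
  have hk : τ.support.card + (τ.supportᶜ).card = k := by
    rw [Finset.card_add_card_compl, Fintype.card_fin]
  have hsum : k + cycleCount τ = τ.cycleType.sum + Multiset.card τ.cycleType
      + 2 * (τ.supportᶜ).card := by
    rw [cycleCount_eq_card_compl_support_add, Equiv.Perm.sum_cycleType, hcard]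
    omega
  rw [Equiv.Perm.sign_of_cycleType, hsum, pow_add _ _ (2 * _), pow_mul]
  simp

/-- The functions constant along both `σ` and `τ` form a space whose dimension is the number
of cycles of `σ τ⁻¹`. -/
theorem finrank_ker_funLeft_sub_funLeft {k : ℕ} (σ τ : Equiv.Perm (Fin k)) :
    Module.finrank ℚ (LinearMap.funLeft ℚ ℚ σ - LinearMap.funLeft ℚ ℚ τ).ker =
      cycleCount (σ * τ⁻¹) := by
  classical
  let Q := MulAction.orbitRel.Quotient (Subgroup.zpowers (σ * τ⁻¹)) (Fin k)
  let q : Fin k → Q := Quotient.mk _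
  have : Fintype Q := Fintype.ofFinite Q
  have hker : (LinearMap.funLeft ℚ ℚ σ - LinearMap.funLeft ℚ ℚ τ).ker =
      (LinearMap.funLeft ℚ ℚ q).range := by
    ext f
    rw [LinearMap.mem_ker, LinearMap.sub_apply, sub_eq_zero, LinearMap.mem_range]
    constructor
    · intro h
      have hstep : ∀ x, f ((σ * τ⁻¹) x) = f x := fun x => by
        simpa [LinearMap.funLeft_apply] using congrFun h (τ⁻¹ x)
      have hpow : ∀ (n : ℕ) x, f (((σ * τ⁻¹) ^ n) x) = f x := by
        intro n
        induction n with
        | zero => simp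
        | succ n ih => intro x; rw [pow_succ', Equiv.Perm.mul_apply, hstep, ih]
      have hcycle : ∀ x y, MulAction.orbitRel (Subgroup.zpowers (σ * τ⁻¹)) (Fin k) x y →
          f x = f y := by
        intro x y hxy
        obtain ⟨n, -, hn⟩ :=
          ((orbitRel_zpowers_iff_sameCycle _ x y).1 hxy).exists_pow_eq'
        rw [← hn, hpow]
      exact ⟨Quotient.lift f hcycle, rfl⟩
    · rintro ⟨h, rfl⟩
      ext x
      simp only [LinearMap.funLeft_apply]
      congr 1
      refine Quotient.sound ((orbitRel_zpowers_iff_sameCycle _ _ _).2 ?_)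
      exact Equiv.Perm.SameCycle.symm ⟨1, by simp⟩
  rw [hker, LinearMap.finrank_range_of_inj
    (LinearMap.funLeft_injective_of_surjective ℚ ℚ q Quotient.mk_surjective),
    Module.finrank_fintype_fun_eq_card, cycleCount, Nat.card_eq_fintype_card]

theorem cycleCount_add_finrank_range {k : ℕ} (σ τ : Equiv.Perm (Fin k)) :
    cycleCount (σ * τ⁻¹) +
      Module.finrank ℚ (LinearMap.funLeft ℚ ℚ σ - LinearMap.funLeft ℚ ℚ τ).range = k := by
  rw [← finrank_ker_funLeft_sub_funLeft, add_comm, LinearMap.finrank_range_add_finrank_ker]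
  simp

/-- A family of linear maps `A i` whose pointwise sum vanishes has total rank at least
the codimension of the common kernel plus the dimension of the span of the ranges. -/
theorem finrank_add_finrank_le_sum_finrank_range {K V W ι : Type*} [Field K] [AddCommGroup V]
    [Module K V] [FiniteDimensional K V] [AddCommGroup W] [Module K W] [FiniteDimensional K W]
    [Fintype ι] (A : ι → V →ₗ[K] W) (hA : ∑ i, A i = 0) :
    Module.finrank K V + Module.finrank K ↥(⨆ i, (A i).range) ≤
      (∑ i, Module.finrank K (A i).range) + Module.finrank K ↥(⨅ i, (A i).ker) := by
  classical
  let β : V →ₗ[K] (∀ i, (A i).range) := LinearMap.pi fun i => (A i).rangeRestrict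
  let δ : (∀ i, (A i).range) →ₗ[K] W :=
    ∑ i, (A i).range.subtype ∘ₗ LinearMap.proj i
  have hker : β.ker = ⨅ i, (A i).ker := by
    simp [β, LinearMap.ker_pi]
  have hrange : (⨆ i, (A i).range) ≤ δ.range := by
    refine iSup_le fun i => ?_
    intro w hw
    refine ⟨Pi.single i ⟨w, hw⟩, ?_⟩
    simp only [δ, LinearMap.sum_apply, LinearMap.comp_apply, LinearMap.proj_apply]
    rw [Finset.sum_eq_single i]
    · simp
    · intro j _ hj
      simp [Pi.single_eq_of_ne hj]
    · simp
  have hcomp : β.range ≤ δ.ker := by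
    rintro _ ⟨v, rfl⟩
    have := LinearMap.congr_fun hA v
    simpa [δ, β, LinearMap.sum_apply] using this
  have hβ := β.finrank_range_add_finrank_ker
  have hδ := δ.finrank_range_add_finrank_ker
  rw [Module.finrank_pi_fintype] at hδ
  rw [hker] at hβ
  have h₁ := Submodule.finrank_mono hrange
  have h₂ := Submodule.finrank_mono hcomp
  omega

/-- If the colored graph is connected, a labelling of its vertices that agrees along every edge
is constant on the white vertices. -/
theorem eq_of_compCount_eq_one {k D : ℕ} {σ : Fin (D + 1) → Equiv.Perm (Fin k)}
    (hconn : compCount σ = 1) {α : Type*} (f u : Fin k → α) (h : ∀ c x, u (σ c x) = f x)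
    (x y : Fin k) : f x = f y := by
  have hsub := (Nat.card_eq_one_iff_unique.1 hconn).1
  have hxy := Quotient.exact (hsub.elim (Quotient.mk _ x) (Quotient.mk _ y))
  obtain ⟨⟨g, hg⟩, rfl⟩ := MulAction.orbitRel_apply.1 hxy
  change f (g y) = f y
  clear hxy
  induction hg using Subgroup.closure_induction generalizing y with
  | mem g hg =>
    obtain ⟨c, -, rfl⟩ := hg
    rw [← h 0, ← h c y]
    simp
  | one => rfl
  | mul a b _ _ ha hb => rw [Equiv.Perm.mul_apply, ha, hb]
  | inv a _ ha => simpa using (ha (a⁻¹ y)).symm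

theorem eq_apply_zero_of_forall_eq_add_one {D : ℕ} {α : Type*} (f : Fin (D + 1) → α)
    (h : ∀ i, f i = f (i + 1)) (i : Fin (D + 1)) : f i = f 0 := by
  induction i using Fin.induction with
  | zero => rfl
  | succ i ih => rw [← Fin.coeSucc_eq_succ, ← h, ih]

/-- Nonnegativity of the genus of a jacket: `r c₁ c₂ = k - c(σ⁽ᶜ¹⁾ ∘ (σ⁽ᶜ²⁾)⁻¹)` sums to at least
`2 (k - 1)` along any cyclic ordering `π` of the colors. -/
theorem two_mul_le_sum_finrank_range_cyclic {k D : ℕ} {σ : Fin (D + 1) → Equiv.Perm (Fin k)}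
    (hk : 1 ≤ k) (hconn : compCount σ = 1) (π : Equiv.Perm (Fin (D + 1))) :
    2 * k ≤ (∑ i, Module.finrank ℚ
      (LinearMap.funLeft ℚ ℚ (σ (π i)) - LinearMap.funLeft ℚ ℚ (σ (π (i + 1)))).range) + 2 := by
  classical
  let x₀ : Fin k := ⟨0, hk⟩
  let P : Fin (D + 1) → (Fin k → ℚ) →ₗ[ℚ] (Fin k → ℚ) :=
    fun i => LinearMap.funLeft ℚ ℚ (σ (π i))
  let A : Fin (D + 1) → (Fin k → ℚ) →ₗ[ℚ] (Fin k → ℚ) := fun i => P i - P (i + 1)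
  have hA : ∑ i, A i = 0 := by
    simp only [A, Finset.sum_sub_distrib]
    rw [sub_eq_zero]
    exact (Equiv.sum_comp (Equiv.addRight 1) P).symm
  have hker : Module.finrank ℚ ↥(⨅ i, (A i).ker) ≤ 1 := by
    have hle : (⨅ i, (A i).ker) ≤ Submodule.span ℚ {fun _ => (1 : ℚ)} := by
      intro f hf
      rw [Submodule.mem_iInf] at hf
      have hP : ∀ i, P i f = P 0 f := eq_apply_zero_of_forall_eq_add_one _ fun i => by
        simpa [A, sub_eq_zero] using hf i
      have hedge : ∀ c x, f (σ c x) = f (σ (π 0) x) := fun c x => by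
        simpa [P, LinearMap.funLeft_apply] using congrFun (hP (π.symm c)) x
      have hconst := eq_of_compCount_eq_one hconn (fun x => f (σ (π 0) x)) f hedge
      refine Submodule.mem_span_singleton.2 ⟨f x₀, funext fun y => ?_⟩
      simpa using hconst ((σ (π 0)).symm x₀) ((σ (π 0)).symm y)
    exact (Submodule.finrank_mono hle).trans ((finrank_span_le_card _).trans (by simp))
  have hspan : k ≤ Module.finrank ℚ ↥(⨆ i, (A i).range) + 1 := by
    set R := ⨆ i, (A i).range
    let e : Fin k → (Fin k → ℚ) := fun x => Pi.single x 1
    have hPe : ∀ i x, P i (e x) = e ((σ (π i)).symm x) := by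
      intro i x
      ext y
      simp [P, e, LinearMap.funLeft_apply, Pi.single_apply, Equiv.eq_symm_apply]
    have hstep : ∀ x i, R.mkQ (e ((σ (π i)).symm x)) = R.mkQ (e ((σ (π (i + 1))).symm x)) := by
      intro x i
      rw [← hPe, ← hPe, ← sub_eq_zero, ← map_sub, Submodule.mkQ_apply,
        Submodule.Quotient.mk_eq_zero]
      exact Submodule.mem_iSup_of_mem i ⟨e x, rfl⟩
    have hall := fun x => eq_apply_zero_of_forall_eq_add_one _ (hstep x)
    have hconst := eq_of_compCount_eq_one hconn (fun x => R.mkQ (e x))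
      (fun b => R.mkQ (e ((σ (π 0)).symm b))) fun c x => by
        rw [← hall _ (π.symm c)]
        simp
    have htop : (⊤ : Submodule ℚ (Fin k → ℚ)) ≤ R ⊔ Submodule.span ℚ {e x₀} := by
      rw [← (Pi.basisFun ℚ (Fin k)).span_eq, Submodule.span_le]
      rintro _ ⟨y, rfl⟩
      have hy : e y - e x₀ ∈ R := by
        rw [← Submodule.Quotient.mk_eq_zero, ← Submodule.mkQ_apply, map_sub, sub_eq_zero]
        exact hconst y x₀
      have := Submodule.add_mem_sup hy (Submodule.mem_span_singleton_self (R := ℚ) (e x₀))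
      simpa [e, Pi.basisFun_apply] using this
    have h₁ := Submodule.finrank_mono htop
    have h₂ := Submodule.finrank_add_le_finrank_add_finrank R (Submodule.span ℚ {e x₀})
    have h₃ : Module.finrank ℚ (Submodule.span ℚ {e x₀}) ≤ 1 := (finrank_span_le_card _).trans (by simp)
    rw [finrank_top, Module.finrank_fin_fun] at h₁
    omega
  have hmain := finrank_add_finrank_le_sum_finrank_range A hA
  rw [Module.finrank_fin_fun] at hmain
  change 2 * k ≤ (∑ i, Module.finrank ℚ (A i).range) + 2
  omega

/-- Averaging over all relabellings: if a weight on ordered pairs sums to at least `m` along every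
Hamiltonian cycle of the complete graph, its total off-diagonal weight is at least `D * m`. -/
theorem mul_le_sum_offDiag_of_cyclic {D : ℕ} (hD : 1 ≤ D)
    (r : Fin (D + 1) → Fin (D + 1) → ℕ) (m : ℕ)
    (h : ∀ π : Equiv.Perm (Fin (D + 1)), m ≤ ∑ i, r (π i) (π (i + 1))) :
    D * m ≤ ∑ p ∈ (Finset.univ : Finset (Fin (D + 1))).offDiag, r p.1 p.2 := by
  classical
  obtain ⟨D, rfl⟩ := Nat.exists_eq_add_of_le' hD
  let T : ℕ := ∑ π : Equiv.Perm (Fin (D + 1 + 1)), r (π 0) (π 1)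
  have hT : ∀ i j : Fin (D + 1 + 1), i ≠ j →
      ∑ π : Equiv.Perm (Fin (D + 1 + 1)), r (π i) (π j) = T := by
    intro i j hij
    obtain ⟨g, hg0, hg1⟩ : ∃ g : Equiv.Perm (Fin (D + 1 + 1)), g 0 = i ∧ g 1 = j := by
      obtain ⟨g, hg⟩ := MulAction.is_two_pretransitive_iff.1
        (Equiv.Perm.isMultiplyPretransitive (Fin (D + 1 + 1)) 2) (Fin.zero_ne_one) hij
      exact ⟨g, hg⟩
    have := Equiv.sum_comp (Equiv.mulRight g) fun π => r (π 0) (π 1)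
    simpa [hg0, hg1] using this
  have hcyc : Fintype.card (Equiv.Perm (Fin (D + 1 + 1))) * m ≤ (D + 1 + 1) * T := by
    calc _ = ∑ _π : Equiv.Perm (Fin (D + 1 + 1)), m := by simp
      _ ≤ ∑ π : Equiv.Perm (Fin (D + 1 + 1)), ∑ i, r (π i) (π (i + 1)) :=
        Finset.sum_le_sum fun π _ => h π
      _ = ∑ i : Fin (D + 1 + 1), T := by
        rw [Finset.sum_comm]
        exact Finset.sum_congr rfl fun i _ => hT _ _ (by simp)
      _ = _ := by simp
  have hoff : Fintype.card (Equiv.Perm (Fin (D + 1 + 1))) *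
      ∑ p ∈ (Finset.univ : Finset (Fin (D + 1 + 1))).offDiag, r p.1 p.2 =
      (D + 1) * ((D + 1 + 1) * T) := by
    calc _ = ∑ π : Equiv.Perm (Fin (D + 1 + 1)),
          ∑ p ∈ (Finset.univ : Finset (Fin (D + 1 + 1))).offDiag, r (π p.1) (π p.2) := by
          rw [← smul_eq_mul, ← Finset.card_univ, ← Finset.sum_const]
          refine Finset.sum_congr rfl fun π _ => ?_
          refine (Finset.sum_equiv (Equiv.prodCongr π π) ?_ ?_).symm <;> simp
      _ = ∑ p ∈ (Finset.univ : Finset (Fin (D + 1 + 1))).offDiag, T := by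
          rw [Finset.sum_comm]
          exact Finset.sum_congr rfl fun p hp => hT _ _ (Finset.mem_offDiag.1 hp).2.2
      _ = _ := by
          rw [Finset.sum_const, Finset.offDiag_card, Finset.card_univ, Fintype.card_fin,
            smul_eq_mul, ← mul_assoc]
          congr 1
          rw [← Nat.mul_sub_one, mul_comm]
          rfl
  refine Nat.le_of_mul_le_mul_left ?_
    (Fintype.card_pos_iff.2 ⟨(1 : Equiv.Perm (Fin (D + 1 + 1)))⟩)
  rw [hoff, mul_left_comm]
  exact Nat.mul_le_mul_left _ hcyc

theorem sum_offDiag_eq_two_mul_sum_lt {n : ℕ} (r : Fin n → Fin n → ℕ)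
    (hr : ∀ i j, r i j = r j i) :
    ∑ p ∈ (Finset.univ : Finset (Fin n)).offDiag, r p.1 p.2 =
      2 * ∑ p ∈ Finset.univ.filter (fun p : Fin n × Fin n => p.1 < p.2), r p.1 p.2 := by
  have hunion : (Finset.univ : Finset (Fin n)).offDiag =
      Finset.univ.filter (fun p : Fin n × Fin n => p.1 < p.2) ∪
        Finset.univ.filter (fun p : Fin n × Fin n => p.2 < p.1) := by
    ext p
    simp [lt_or_lt_iff_ne]
  rw [hunion, Finset.sum_union, two_mul]
  · congr 1
    refine Finset.sum_equiv (Equiv.prodComm _ _) ?_ ?_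
    · simp
    · intro p _
      exact hr _ _
  · rw [Finset.disjoint_filter]
    exact fun p _ h => h.not_gt

theorem faceCount_le {k D : ℕ} (hk : 1 ≤ k) (hD : 1 ≤ D)
    {σ : Fin (D + 1) → Equiv.Perm (Fin k)} (hconn : compCount σ = 1) :
    faceCount σ ≤ D * (D - 1) / 2 * k + D := by
  let r : Fin (D + 1) → Fin (D + 1) → ℕ := fun i j =>
    Module.finrank ℚ (LinearMap.funLeft ℚ ℚ (σ i) - LinearMap.funLeft ℚ ℚ (σ j)).range
  have hsymm : ∀ i j, r i j = r j i := fun i j => by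
    simp only [r]
    rw [← LinearMap.range_neg, neg_sub]
  have hrank := mul_le_sum_offDiag_of_cyclic hD r (2 * (k - 1)) fun π => by
    have := two_mul_le_sum_finrank_range_cyclic hk hconn π
    simp only [r]
    omega
  rw [sum_offDiag_eq_two_mul_sum_lt r hsymm] at hrank
  have hpairs : 2 * (Finset.univ.filter
      (fun p : Fin (D + 1) × Fin (D + 1) => p.1 < p.2)).card = (D + 1) * D := by
    have := sum_offDiag_eq_two_mul_sum_lt (n := D + 1) (fun _ _ => 1) fun _ _ => rfl
    simp only [Finset.sum_const, smul_eq_mul, mul_one] at this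
    rw [← this, Finset.offDiag_card, Finset.card_univ, Fintype.card_fin, ← Nat.mul_sub_one]
    rfl
  have htotal : faceCount σ + ∑ p ∈ Finset.univ.filter
      (fun p : Fin (D + 1) × Fin (D + 1) => p.1 < p.2), r p.1 p.2 =
      (Finset.univ.filter (fun p : Fin (D + 1) × Fin (D + 1) => p.1 < p.2)).card * k := by
    rw [faceCount, ← Finset.sum_add_distrib]
    simp [r, cycleCount_add_finrank_range]
  have heven : 2 * (D * (D - 1) / 2) = D * (D - 1) :=
    Nat.mul_div_cancel' (Nat.even_mul_pred_self D).two_dvd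
  obtain ⟨D, rfl⟩ := Nat.exists_eq_add_of_le' hD
  obtain ⟨k, rfl⟩ := Nat.exists_eq_add_of_le' hk
  simp only [Nat.add_sub_cancel] at *
  nlinarith

/-- Parity of the Euler characteristic of the surface encoded by three permutations. -/
theorem even_add_faceCount {k : ℕ} (σ : Fin (2 + 1) → Equiv.Perm (Fin k)) :
    Even (k + faceCount σ) := by
  have hfaces : faceCount σ = cycleCount (σ 0 * (σ 1)⁻¹) + cycleCount (σ 0 * (σ 2)⁻¹) +
      cycleCount (σ 1 * (σ 2)⁻¹) := by
    rw [faceCount, show Finset.univ.filter (fun p : Fin (2 + 1) × Fin (2 + 1) => p.1 < p.2) =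
      {(0, 1), (0, 2), (1, 2)} by decide]
    rw [Finset.sum_insert (by decide), Finset.sum_insert (by decide), Finset.sum_singleton,
      add_assoc]
  have hsign : (-1 : ℤˣ) ^ (k + faceCount σ + 2 * k) = 1 := by
    rw [show k + faceCount σ + 2 * k = (k + cycleCount (σ 0 * (σ 1)⁻¹)) +
      (k + cycleCount (σ 0 * (σ 2)⁻¹)) + (k + cycleCount (σ 1 * (σ 2)⁻¹)) by omega,
      pow_add, pow_add]
    simp only [← sign_eq_neg_one_pow_add_cycleCount, map_mul, Equiv.Perm.sign_inv]
    rcases Int.units_eq_one_or (Equiv.Perm.sign (σ 0)) with h₀ | h₀ <;>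
    rcases Int.units_eq_one_or (Equiv.Perm.sign (σ 1)) with h₁ | h₁ <;>
    rcases Int.units_eq_one_or (Equiv.Perm.sign (σ 2)) with h₂ | h₂ <;>
    simp [h₀, h₁, h₂]
  have heven := (neg_one_pow_eq_one_iff_even (R := ℤˣ) (by decide)).1 hsign
  grind

/-- Theorem 1 (degree theorem, connected case): if the `(D+1)`-colored graph encoded by
`σ` is connected then there is a nonnegative integer `ω` (the degree) with
`2·ω = (D−1)! · (D(D−1)/2 · k + D − F(σ))`; in particular `F(σ) ≤ D(D−1)/2 · k + D`. -/
theorem degree_theorem_connected (k D : ℕ) (hk : 1 ≤ k) (hD : 2 ≤ D)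
    (σ : Fin (D + 1) → Equiv.Perm (Fin k)) (hconn : compCount σ = 1) :
    (∃ ω : ℕ, (2 : ℤ) * ω =
        (Nat.factorial (D - 1) : ℤ) *
          ((D * (D - 1) / 2 : ℕ) * k + D - (faceCount σ : ℤ))) ∧
      faceCount σ ≤ D * (D - 1) / 2 * k + D := by
  have hle := faceCount_le hk (by omega) hconn
  refine ⟨?_, hle⟩
  have hdvd : 2 ∣ Nat.factorial (D - 1) * (D * (D - 1) / 2 * k + D - faceCount σ) := by
    rcases hD.eq_or_lt with rfl | hD
    · refine Dvd.dvd.mul_left ?_ _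
      have := even_add_faceCount σ
      have hnum : 2 * (2 - 1) / 2 * k + 2 = k + 2 := by norm_num
      rw [hnum] at hle ⊢
      grind
    · exact (Nat.dvd_factorial two_pos (by omega)).mul_right _
  obtain ⟨ω, hω⟩ := hdvd
  refine ⟨ω, ?_⟩
  have hcast := congrArg (Nat.cast : ℕ → ℤ) hω
  push_cast [Nat.cast_sub hle] at hcast
  exact_mod_cast hcast.symm
end

section
/- Euler relation for jackets (general case): for any (D+1)-tuple σ of permutations of {1,…,k} and every cyclic permutation π of the color set {0,1,…,D}, there exists a nonnegative integer g (the genus of the jacket J_π, equal to the sum of the genera of its connected components) such that F_π(σ) = (D−1)·k + 2·C(σ) − 2g. -/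
/-- Face count of the jacket associated to the cyclic color permutation `π`:
`F_π(σ) = Σ_{q=0}^{D} c(σ^{(π^q(0))} ∘ (σ^{(π^{q+1}(0))})⁻¹)`. -/
noncomputable def jacketFaceCount {k D : ℕ} (σ : Fin (D + 1) → Equiv.Perm (Fin k))
    (π : Equiv.Perm (Fin (D + 1))) : ℕ :=
  ∑ q ∈ Finset.range (D + 1),
    cycleCount (σ ((π ^ q) 0) * (σ ((π ^ (q + 1)) 0))⁻¹)

open Equiv

section Setoid

variable {α : Type*}

/-- The setoid obtained from `r` by gluing the classes of `x` and `y`. -/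
def Setoid.glue (r : Setoid α) (x y : α) : Setoid α where
  r a b := r a b ∨ (r a x ∧ r b y) ∨ (r a y ∧ r b x)
  iseqv :=
    { refl := fun a => Or.inl (r.refl a)
      symm := by
        rintro a b (h | h | h)
        · exact Or.inl (r.symm h)
        · exact Or.inr (Or.inr h.symm)
        · exact Or.inr (Or.inl h.symm)
      trans := by
        have ht : ∀ {a b c}, r a b → r b c → r a c := r.trans
        have hs : ∀ {a b}, r a b → r b a := r.symm
        rintro a b c (h | ⟨h, h'⟩ | ⟨h, h'⟩) (k | ⟨k, k'⟩ | ⟨k, k'⟩)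
        · exact Or.inl (ht h k)
        · exact Or.inr (Or.inl ⟨ht h k, k'⟩)
        · exact Or.inr (Or.inr ⟨ht h k, k'⟩)
        · exact Or.inr (Or.inl ⟨h, ht (hs k) h'⟩)
        · exact Or.inr (Or.inl ⟨h, k'⟩)
        · exact Or.inl (ht h (hs k'))
        · exact Or.inr (Or.inr ⟨h, ht (hs k) h'⟩)
        · exact Or.inl (ht h (hs k'))
        · exact Or.inr (Or.inr ⟨h, k'⟩) }

theorem Setoid.le_glue (r : Setoid α) (x y : α) : r ≤ r.glue x y :=
  fun _ _ h => Or.inl h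

theorem Setoid.glue_rel (r : Setoid α) (x y : α) : r.glue x y x y :=
  Or.inr (Or.inl ⟨r.refl x, r.refl y⟩)

theorem Setoid.glue_le {r s : Setoid α} {x y : α} (h : r ≤ s) (hxy : s x y) :
    r.glue x y ≤ s := by
  rintro a b (hab | ⟨ha, hb⟩ | ⟨ha, hb⟩)
  · exact h hab
  · exact s.trans (h ha) (s.trans hxy (s.symm (h hb)))
  · exact s.trans (h ha) (s.trans (s.symm hxy) (s.symm (h hb)))

theorem Setoid.glue_eq_self {r : Setoid α} {x y : α} (h : r x y) : r.glue x y = r :=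
  le_antisymm (Setoid.glue_le le_rfl h) (r.le_glue x y)

theorem Setoid.card_quotient_glue_add_one [Finite α] {r : Setoid α} {x y : α} (h : ¬ r x y) :
    Nat.card (Quotient (r.glue x y)) + 1 = Nat.card (Quotient r) := by
  classical
  let f : {c : Quotient r // c ≠ Quotient.mk r y} → Quotient (r.glue x y) :=
    fun c => Quotient.map' id (fun _ _ hab => r.le_glue x y hab) c.1
  have hf : Function.Bijective f := by
    constructor
    · rintro ⟨a, ha⟩ ⟨b, hb⟩ hab
      induction a using Quotient.inductionOn with | _ a
      induction b using Quotient.inductionOn with | _ b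
      have ha' : ¬ r a y := fun h' => ha (Quotient.sound h')
      have hb' : ¬ r b y := fun h' => hb (Quotient.sound h')
      rcases (Quotient.exact hab : r.glue x y a b) with h' | h' | h'
      · exact Subtype.ext (Quotient.sound h')
      · exact absurd h'.2 hb'
      · exact absurd h'.1 ha'
    · intro c
      induction c using Quotient.inductionOn with | _ c
      by_cases hc : r c y
      · refine ⟨⟨Quotient.mk r x, fun h' => h (Quotient.exact h')⟩, ?_⟩
        exact Quotient.sound (Or.inr (Or.inl ⟨r.refl x, hc⟩))
      · exact ⟨⟨Quotient.mk r c, fun h' => hc (Quotient.exact h')⟩, rfl⟩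
  rw [← Nat.card_eq_of_bijective f hf]
  have := Fintype.ofFinite (Quotient r)
  rw [Nat.card_eq_fintype_card, Nat.card_eq_fintype_card, Fintype.card_subtype_compl,
    Fintype.card_subtype_eq]
  have : 0 < Fintype.card (Quotient r) := Fintype.card_pos_iff.2 ⟨Quotient.mk r y⟩
  omega

end Setoid

section SameCycle

variable {α : Type*} {p : Perm α} {x y : α}

theorem sameCycle_setoid_le [Finite α] {s : Setoid α} (h : ∀ z, s z (p z)) :
    Perm.SameCycle.setoid p ≤ s := by
  intro a b hab
  obtain ⟨n, rfl⟩ := Perm.SameCycle.exists_nat_pow_eq hab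
  clear hab
  induction n with
  | zero => exact s.refl _
  | succ n ih =>
    rw [pow_succ']
    exact s.trans ih (h _)

theorem sameCycle_apply_self (p : Perm α) (z : α) : p.SameCycle z (p z) :=
  ⟨1, by simp⟩

variable [DecidableEq α]

theorem sameCycle_setoid_swap_mul_le [Finite α] {s : Setoid α}
    (h : Perm.SameCycle.setoid p ≤ s) (x y : α) :
    Perm.SameCycle.setoid (swap x y * p) ≤ s.glue x y := by
  refine sameCycle_setoid_le fun z => ?_
  have hz : s.glue x y z (p z) := s.le_glue x y (h (sameCycle_apply_self p z))
  rw [Perm.mul_apply]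
  by_cases hx : p z = x
  · rw [hx] at hz ⊢
    rw [swap_apply_left]
    exact Setoid.trans' _ hz (s.glue_rel x y)
  by_cases hy : p z = y
  · rw [hy] at hz ⊢
    rw [swap_apply_right]
    exact Setoid.trans' _ hz (Setoid.symm' _ (s.glue_rel x y))
  rwa [swap_apply_of_ne_of_ne hx hy]

theorem sameCycle_setoid_swap_mul_glue [Finite α] (p : Perm α) (x y : α) :
    (Perm.SameCycle.setoid (swap x y * p)).glue x y = (Perm.SameCycle.setoid p).glue x y := by
  refine le_antisymm (Setoid.glue_le (sameCycle_setoid_swap_mul_le le_rfl x y)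
    (Setoid.glue_rel _ x y)) (Setoid.glue_le ?_ (Setoid.glue_rel _ x y))
  simpa using sameCycle_setoid_swap_mul_le (p := swap x y * p) le_rfl x y

theorem sameCycle_swap_mul_of_not_sameCycle [Finite α] (h : ¬ p.SameCycle x y) :
    (swap x y * p).SameCycle x y := by
  have key : ∀ n : ℕ, (swap x y * p).SameCycle x ((p ^ n) x) := by
    intro n
    induction n with
    | zero => exact Perm.SameCycle.refl _ _
    | succ n ih =>
      have hy : (p ^ (n + 1)) x ≠ y := fun h' => h ⟨n + 1, by exact_mod_cast h'⟩
      by_cases hx : (p ^ (n + 1)) x = x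
      · rw [hx]
      · have := ih.trans (sameCycle_apply_self (swap x y * p) _)
        rwa [Perm.mul_apply, ← Perm.mul_apply p, ← pow_succ', swap_apply_of_ne_of_ne hx hy] at this
  obtain ⟨n, hn⟩ := Perm.SameCycle.exists_nat_pow_eq
    (show p.SameCycle x (p⁻¹ x) from ⟨-1, by simp⟩)
  have := (key n).trans (sameCycle_apply_self (swap x y * p) _)
  simpa [hn] using this

theorem not_sameCycle_swap_mul_of_sameCycle [Finite α] (hxy : x ≠ y) (h : p.SameCycle x y) :
    ¬ (swap x y * p).SameCycle x y := by
  have hex : ∃ n : ℕ, (p ^ n) x = y := h.exists_nat_pow_eq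
  classical
  set n := Nat.find hex with hn
  have hny : (p ^ n) x = y := Nat.find_spec hex
  have hmin : ∀ m < n, (p ^ m) x ≠ y := fun m hm => Nat.find_min hex hm
  have hn0 : 0 < n := by
    rcases Nat.eq_zero_or_pos n with h0 | h0
    · rw [h0] at hny
      exact absurd hny hxy
    · exact h0
  have key : ∀ j : ℕ, ∃ i < n, ((swap x y * p) ^ j) x = (p ^ i) x := by
    intro j
    induction j with
    | zero => exact ⟨0, hn0, rfl⟩
    | succ j ih =>
      obtain ⟨i, hi, hj⟩ := ih
      rw [pow_succ', Perm.mul_apply, hj, Perm.mul_apply, ← Perm.mul_apply p, ← pow_succ']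
      rcases (Nat.succ_le_of_lt hi).eq_or_lt with hi' | hi'
      · refine ⟨0, hn0, ?_⟩
        rw [← Nat.succ_eq_add_one, hi', hny, swap_apply_right]
        rfl
      · refine ⟨i + 1, hi', swap_apply_of_ne_of_ne (fun hx => ?_) (hmin _ hi')⟩
        refine hmin (n - (i + 1)) (by omega) ?_
        conv_lhs => rw [← hx]
        rw [← Perm.mul_apply, ← pow_add, Nat.sub_add_cancel hi'.le, hny]
  intro hq
  obtain ⟨j, hj⟩ := hq.exists_nat_pow_eq
  obtain ⟨i, hi, hji⟩ := key j
  exact hmin i hi (hji.symm.trans hj)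

end SameCycle

section Genus

variable {k : ℕ}

theorem cycleCount_eq_card_quotient (τ : Perm (Fin k)) :
    cycleCount τ = Nat.card (Quotient (Perm.SameCycle.setoid τ)) := by
  have : MulAction.orbitRel (Subgroup.zpowers τ) (Fin k) = Perm.SameCycle.setoid τ := by
    ext a b
    rw [MulAction.orbitRel_apply, MulAction.mem_orbit_iff]
    constructor
    · rintro ⟨⟨_, n, rfl⟩, h⟩
      exact Perm.SameCycle.symm ⟨n, h⟩
    · intro h
      obtain ⟨n, hn⟩ := Perm.SameCycle.symm h
      exact ⟨⟨τ ^ n, n, rfl⟩, hn⟩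
  rw [cycleCount, MulAction.orbitRel.Quotient, this]

theorem cycleCount_inv (τ : Perm (Fin k)) : cycleCount τ⁻¹ = cycleCount τ := by
  rw [cycleCount, cycleCount, Subgroup.zpowers_inv]

theorem cycleCount_one : cycleCount (1 : Perm (Fin k)) = k := by
  have : Function.Bijective (Quotient.mk (Perm.SameCycle.setoid (1 : Perm (Fin k)))) :=
    ⟨fun a b h => Perm.sameCycle_one.1 (Quotient.exact h), Quotient.mk_surjective⟩
  rw [cycleCount_eq_card_quotient, ← Nat.card_eq_of_bijective _ this, Nat.card_fin]

theorem cycleCount_swap_mul_of_sameCycle {p : Perm (Fin k)} {x y : Fin k} (hxy : x ≠ y)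
    (h : p.SameCycle x y) : cycleCount (swap x y * p) = cycleCount p + 1 := by
  rw [cycleCount_eq_card_quotient, cycleCount_eq_card_quotient,
    ← Setoid.card_quotient_glue_add_one
      (r := Perm.SameCycle.setoid (swap x y * p)) (not_sameCycle_swap_mul_of_sameCycle hxy h),
    sameCycle_setoid_swap_mul_glue, Setoid.glue_eq_self (r := Perm.SameCycle.setoid p) h]

theorem cycleCount_swap_mul_add_one_of_not_sameCycle {p : Perm (Fin k)} {x y : Fin k}
    (h : ¬ p.SameCycle x y) : cycleCount (swap x y * p) + 1 = cycleCount p := by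
  have hxy : x ≠ y := by
    rintro rfl
    exact h (Perm.SameCycle.refl _ _)
  rw [← cycleCount_swap_mul_of_sameCycle hxy (sameCycle_swap_mul_of_not_sameCycle h),
    swap_mul_self_mul]

/-- The cycles of `p` refine the classes of `s`, and `N + 2 |s| = k + c(p) + 2 g` for some `g : ℕ`.
This holds when `p` is a product of `N` transpositions and the classes of `s` are the components
of the graph they span. -/
def EulerRelation (N : ℕ) (s : Setoid (Fin k)) (p : Perm (Fin k)) : Prop :=
  Perm.SameCycle.setoid p ≤ s ∧
    ∃ g : ℕ, N + 2 * Nat.card (Quotient s) = k + cycleCount p + 2 * g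

theorem EulerRelation.swap_mul {N : ℕ} {s : Setoid (Fin k)} {p : Perm (Fin k)}
    (h : EulerRelation N s p) {x y : Fin k} (hxy : x ≠ y) :
    EulerRelation (N + 1) (s.glue x y) (swap x y * p) := by
  obtain ⟨hle, g, hg⟩ := h
  refine ⟨sameCycle_setoid_swap_mul_le hle x y, ?_⟩
  by_cases hs : s x y
  · rw [Setoid.glue_eq_self hs]
    by_cases hp : p.SameCycle x y
    · have := cycleCount_swap_mul_of_sameCycle hxy hp
      exact ⟨g, by omega⟩
    · have := cycleCount_swap_mul_add_one_of_not_sameCycle hp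
      exact ⟨g + 1, by omega⟩
  · have := cycleCount_swap_mul_add_one_of_not_sameCycle (p := p) fun hp => hs (hle hp)
    have := Setoid.card_quotient_glue_add_one hs
    exact ⟨g, by omega⟩

theorem EulerRelation.mul {N : ℕ} {s : Setoid (Fin k)} {p : Perm (Fin k)}
    (h : EulerRelation N s p) (τ : Perm (Fin k)) :
    ∃ n s', cycleCount τ + n = k ∧ s ≤ s' ∧ Perm.SameCycle.setoid τ ≤ s' ∧
      EulerRelation (N + n) s' (τ * p) := by
  induction hm : τ.support.card using Nat.strong_induction_on generalizing τ with
  | _ m ih =>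
    by_cases hτ : τ = 1
    · subst hτ
      refine ⟨0, s, cycleCount_one, le_rfl, sameCycle_setoid_le fun z => s.refl z, ?_⟩
      simpa using h
    · obtain ⟨x, hx⟩ : ∃ x, τ x ≠ x := by
        by_contra! hcon
        exact hτ (Perm.ext hcon)
      obtain ⟨n, s', hn, hss', hτs', hE⟩ := ih _
        (hm ▸ Perm.card_support_swap_mul hx) (swap x (τ x) * τ) rfl
      have hc := cycleCount_swap_mul_of_sameCycle hx.symm (sameCycle_apply_self τ x)
      refine ⟨n + 1, s'.glue x (τ x), by omega, hss'.trans (s'.le_glue _ _), ?_, ?_⟩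
      · simpa using sameCycle_setoid_swap_mul_le hτs' x (τ x)
      · simpa [mul_assoc, add_assoc] using hE.swap_mul hx.symm

theorem exists_eulerRelation_telescope (a : ℕ → Perm (Fin k)) (n : ℕ) :
    ∃ N s, N + ∑ q ∈ Finset.range n, cycleCount (a q * (a (q + 1))⁻¹) = n * k ∧
      (∀ q ≤ n, ∀ z, s (a 0 z) (a q z)) ∧ EulerRelation N s (a n * (a 0)⁻¹) := by
  induction n with
  | zero =>
    refine ⟨0, Perm.SameCycle.setoid 1, by simp, ?_, ?_⟩
    · intro q hq z
      rw [Nat.le_zero.1 hq]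
    · rw [mul_inv_cancel]
      exact ⟨le_rfl, 0, by rw [← cycleCount_eq_card_quotient, cycleCount_one]; ring⟩
  | succ n ih =>
    obtain ⟨N, s, hN, hs, hE⟩ := ih
    obtain ⟨m, s', hm, hss', hτ, hE'⟩ := hE.mul (a (n + 1) * (a n)⁻¹)
    refine ⟨N + m, s', ?_, ?_, ?_⟩
    · have : cycleCount (a n * (a (n + 1))⁻¹) = cycleCount (a (n + 1) * (a n)⁻¹) := by
        rw [← cycleCount_inv, mul_inv_rev, inv_inv]
      rw [Finset.sum_range_succ, this, Nat.succ_mul]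
      omega
    · intro q hq z
      rcases hq.eq_or_lt with rfl | hq
      · refine s'.trans (hss' (hs n le_rfl z)) ?_
        simpa using hτ (sameCycle_apply_self (a (n + 1) * (a n)⁻¹) (a n z))
      · exact hss' (hs q (Nat.lt_succ_iff.1 hq) z)
    · simpa [mul_assoc] using hE'

theorem card_quotient_le_compCount {D : ℕ} {σ : Fin (D + 1) → Perm (Fin k)} {s : Setoid (Fin k)}
    (h : ∀ c z, s (σ 0 z) (σ c z)) : Nat.card (Quotient s) ≤ compCount σ := by
  set G := Subgroup.closure
    {g : Perm (Fin k) | ∃ c : Fin (D + 1), c ≠ 0 ∧ g = (σ 0)⁻¹ * σ c} with hG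
  have key : ∀ g ∈ G, ∀ z, s (σ 0 z) (σ 0 (g z)) := by
    intro g hg
    induction hg using Subgroup.closure_induction with
    | mem g hg =>
      obtain ⟨c, -, rfl⟩ := hg
      intro z
      simpa using h c z
    | one => exact fun z => s.refl _
    | mul g g' _ _ ih ih' => exact fun z => s.trans (ih' z) (ih (g' z))
    | inv g _ ih => exact fun z => s.symm (by simpa using ih (g⁻¹ z))
  let f : MulAction.orbitRel.Quotient G (Fin k) → Quotient s :=
    Quotient.map' (σ 0) fun a b hab => by
      obtain ⟨⟨g, hg⟩, rfl⟩ := MulAction.mem_orbit_iff.1 (MulAction.orbitRel_apply.1 hab)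
      exact s.symm (key g hg b)
  have hf : Function.Surjective f := by
    intro c
    induction c using Quotient.inductionOn with | _ c
    refine ⟨Quotient.mk _ ((σ 0)⁻¹ c), ?_⟩
    change Quotient.mk s (σ 0 ((σ 0)⁻¹ c)) = _
    simp
  exact Nat.card_le_card_of_surjective f hf

end Genus

/-- Euler relation for jackets (general case): for any `σ` and every cyclic permutation
`π` of the colors there is a nonnegative integer `g` (the genus of the jacket `J_π`,
the sum of the genera of its connected components) with
`F_π(σ) = (D−1)·k + 2·C(σ) − 2g`. -/
theorem jacket_euler (k D : ℕ) (hk : 1 ≤ k) (hD : 2 ≤ D)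
    (σ : Fin (D + 1) → Equiv.Perm (Fin k))
    (π : Equiv.Perm (Fin (D + 1))) (hcyc : π.IsCycle) (hsupp : π.support = Finset.univ) :
    ∃ g : ℕ, (jacketFaceCount σ π : ℤ) = (D - 1 : ℤ) * k + 2 * compCount σ - 2 * g := by
  have hord : orderOf π = D + 1 := by
    rw [hcyc.orderOf, hsupp, Finset.card_univ, Fintype.card_fin]
  have hpow : π ^ (D + 1) = 1 := by
    simpa only [hord] using pow_orderOf_eq_one π
  have hmoved : ∀ c, π c ≠ c := fun c => Perm.mem_support.1 (hsupp ▸ Finset.mem_univ c)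
  obtain ⟨N, s, hN, hs, -, g, hg⟩ :=
    exists_eulerRelation_telescope (fun q => σ ((π ^ q) 0)) (D + 1)
  have hlast : σ ((π ^ (D + 1)) 0) * (σ ((π ^ 0) 0))⁻¹ = 1 := by
    rw [hpow, pow_zero, mul_inv_cancel]
  rw [hlast, cycleCount_one] at hg
  have hC : Nat.card (Quotient s) ≤ compCount σ := by
    refine card_quotient_le_compCount fun c z => ?_
    obtain ⟨i, hi⟩ := hcyc.exists_pow_eq (hmoved 0) (hmoved c)
    have := hs (i % (D + 1)) (Nat.mod_lt _ D.succ_pos).le z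
    rw [← pow_eq_pow_mod i hpow, hi] at this
    simpa using this
  refine ⟨g + (compCount σ - Nat.card (Quotient s)), ?_⟩
  change N + jacketFaceCount σ π = _ at hN
  zify [hC] at hN hg ⊢
  linarith
end

section
/- Theorem 2 (degree inequality under deletion of the color-0 edges): for D ≥ 3 and any (D+1)-tuple σ of permutations of {1,…,k}, the degree of σ is at least D times the degree of its D-bubble, i.e. ω(σ) ≥ D·ω(σ_D); equivalently, in terms of face and component counts, (D−1)·( D(D−1)/2 · k + D·C(σ) − F(σ) ) ≥ D·( (D−1)(D−2)/2 · k + (D−1)·C_D(σ_D) − F_D(σ_D) ). -/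
/-- Number of faces of the `D`-bubble (colors `1,…,D`) of `σ`:
`F_D(σ_D) = Σ_{1 ≤ c₁ < c₂ ≤ D} c(σ⁽ᶜ¹⁾ ∘ (σ⁽ᶜ²⁾)⁻¹)`. -/
noncomputable def bubbleFaceCount {k D : ℕ} (σ : Fin (D + 1) → Equiv.Perm (Fin k)) : ℕ :=
  ∑ p ∈ Finset.univ.filter
      (fun p : Fin (D + 1) × Fin (D + 1) => 0 < p.1 ∧ p.1 < p.2),
    cycleCount (σ p.1 * (σ p.2)⁻¹)

/-- Number of connected components of the `D`-bubble of `σ`: the number of orbits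
on `Fin k` of the subgroup generated by `(σ⁽¹⁾)⁻¹ ∘ σ⁽ᶜ⁾`, `2 ≤ c ≤ D`. -/
noncomputable def bubbleCompCount {k D : ℕ} (σ : Fin (D + 1) → Equiv.Perm (Fin k)) : ℕ :=
  Nat.card (MulAction.orbitRel.Quotient
    (Subgroup.closure
      {g : Equiv.Perm (Fin k) | ∃ c : Fin (D + 1), 1 < c ∧ g = (σ 1)⁻¹ * σ c}) (Fin k))

open MulAction Subgroup

section Orbits

variable {α : Type*}

/-- The number of orbits of a group of permutations of `α`. -/
noncomputable def orbitCount (G : Subgroup (Equiv.Perm α)) : ℕ :=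
  Nat.card (orbitRel.Quotient G α)

lemma orbitRel_perm_iff {G : Subgroup (Equiv.Perm α)} {a b : α} :
    orbitRel G α a b ↔ ∃ g ∈ G, g b = a := by
  rw [orbitRel_apply, mem_orbit_iff]
  exact ⟨fun ⟨g, hg⟩ => ⟨g.1, g.2, hg⟩, fun ⟨g, hg, h⟩ => ⟨⟨g, hg⟩, h⟩⟩

lemma orbitRel_mono {G G' : Subgroup (Equiv.Perm α)} (h : G ≤ G') {a b : α}
    (hab : orbitRel G α a b) : orbitRel G' α a b := by
  rw [orbitRel_perm_iff] at *
  obtain ⟨g, hg, rfl⟩ := hab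
  exact ⟨g, h hg, rfl⟩

lemma orbitRel_apply_left {G : Subgroup (Equiv.Perm α)} {g : Equiv.Perm α} (hg : g ∈ G)
    {a b : α} (hab : orbitRel G α a b) : orbitRel G α (g a) b := by
  rw [orbitRel_perm_iff] at *
  obtain ⟨h, hh, rfl⟩ := hab
  exact ⟨g * h, mul_mem hg hh, rfl⟩

/-- The canonical map between orbit spaces of nested groups. -/
def orbitQuotientMap {G G' : Subgroup (Equiv.Perm α)} (h : G ≤ G') :
    orbitRel.Quotient G α → orbitRel.Quotient G' α :=
  Quotient.map' id fun _ _ hab => orbitRel_mono h hab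

lemma orbitQuotientMap_surjective {G G' : Subgroup (Equiv.Perm α)} (h : G ≤ G') :
    Function.Surjective (orbitQuotientMap h) := by
  rintro ⟨a⟩
  exact ⟨Quotient.mk'' a, rfl⟩

/-- A function invariant under `G` and under `t` is constant on orbits of `G ⊔ ⟨t⟩`. -/
lemma eq_of_orbitRel_sup_zpowers {β : Type*} {G : Subgroup (Equiv.Perm α)} {t : Equiv.Perm α}
    (φ : α → β) (hG : ∀ g ∈ G, ∀ a, φ (g a) = φ a) (ht : ∀ a, φ (t a) = φ a) {a b : α}
    (hab : orbitRel (G ⊔ zpowers t : Subgroup (Equiv.Perm α)) α a b) : φ a = φ b := by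
  let K : Subgroup (Equiv.Perm α) :=
    { carrier := {g | ∀ a, φ (g a) = φ a}
      mul_mem' := fun {g h} hg hh a => (hg (h a)).trans (hh a)
      one_mem' := fun _ => rfl
      inv_mem' := fun {g} hg a => by simpa using (hg (g⁻¹ a)).symm }
  have hK : G ⊔ zpowers t ≤ K := sup_le hG (zpowers_le.2 ht)
  obtain ⟨g, hg, rfl⟩ := orbitRel_perm_iff.1 hab
  exact hK hg b

lemma orbitCount_zpowers_one : orbitCount (zpowers (1 : Equiv.Perm α)) = Nat.card α := by
  refine (Nat.card_congr (Equiv.ofBijective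
    (Quotient.mk'' : α → orbitRel.Quotient (zpowers (1 : Equiv.Perm α)) α) ⟨?_, ?_⟩)).symm
  · intro a b hab
    obtain ⟨g, hg, h⟩ := orbitRel_perm_iff.1 (Quotient.eq''.1 hab)
    rw [zpowers_one_eq_bot, mem_bot] at hg
    simpa [hg] using h.symm
  · exact Quotient.mk''_surjective

lemma zpowers_le_swap_mul_sup [DecidableEq α] (w : Equiv.Perm α) (x y : α) :
    zpowers w ≤ zpowers (Equiv.swap x y * w) ⊔ zpowers (Equiv.swap x y) := by
  refine zpowers_le.2 ?_
  have h := mul_mem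
    (mem_sup_right (mem_zpowers (Equiv.swap x y)) :
      _ ∈ zpowers (Equiv.swap x y * w) ⊔ zpowers (Equiv.swap x y))
    (mem_sup_left (mem_zpowers (Equiv.swap x y * w)))
  rwa [Equiv.swap_mul_self_mul] at h

variable [Finite α]

lemma orbitCount_anti {G G' : Subgroup (Equiv.Perm α)} (h : G ≤ G') :
    orbitCount G' ≤ orbitCount G :=
  Nat.card_le_card_of_surjective _ (orbitQuotientMap_surjective h)

lemma orbitCount_lt {G G' : Subgroup (Equiv.Perm α)} (h : G ≤ G') {x y : α}
    (hxy : ¬ orbitRel G α x y) (hxy' : orbitRel G' α x y) :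
    orbitCount G' < orbitCount G := by
  by_contra! hle
  have hinj : Function.Injective (orbitQuotientMap h) :=
    ((Nat.bijective_iff_surjective_and_card _).2
      ⟨orbitQuotientMap_surjective h, le_antisymm hle (orbitCount_anti h)⟩).1
  exact hxy (Quotient.eq''.1 (@hinj (Quotient.mk'' x) (Quotient.mk'' y) (Quotient.eq''.2 hxy')))

variable [DecidableEq α]

lemma orbitCount_le_sup_swap {G : Subgroup (Equiv.Perm α)} {x y : α} (hxy : orbitRel G α x y) :
    orbitCount G ≤ orbitCount (G ⊔ zpowers (Equiv.swap x y)) := by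
  refine Nat.card_le_card_of_injective (orbitQuotientMap le_sup_left) ?_
  rintro ⟨a⟩ ⟨b⟩ hab
  refine eq_of_orbitRel_sup_zpowers (fun a => (Quotient.mk'' a : orbitRel.Quotient G α)) ?_ ?_
    (Quotient.eq''.1 hab)
  · exact fun g hg a => Quotient.eq''.2 (orbitRel_perm_iff.2 ⟨g, hg, rfl⟩)
  · intro a
    refine Quotient.eq''.2 ?_
    by_cases hax : a = x
    · subst hax; simpa using (orbitRel G α).symm hxy
    by_cases hay : a = y
    · subst hay; simpa using hxy
    rw [Equiv.swap_apply_of_ne_of_ne hax hay]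

lemma orbitCount_le_sup_swap_add_one (G : Subgroup (Equiv.Perm α)) (x y : α) :
    orbitCount G ≤ orbitCount (G ⊔ zpowers (Equiv.swap x y)) + 1 := by
  classical
  let π : α → orbitRel.Quotient G α := Quotient.mk''
  let φ : α → orbitRel.Quotient G α := fun a => if π a = π y then π x else π a
  have hπ : ∀ g ∈ G, ∀ a, π (g a) = π a := fun g hg a =>
    Quotient.eq''.2 (orbitRel_perm_iff.2 ⟨g, hg, rfl⟩)
  rw [orbitCount, orbitCount, ← Finite.card_option]
  refine Nat.card_le_card_of_injective
    (fun q => if q = π y then none else some (orbitQuotientMap le_sup_left q)) ?_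
  rintro ⟨a⟩ ⟨b⟩ hab
  change (if π a = π y then _ else _) = (if π b = π y then _ else _) at hab
  change π a = π b
  split_ifs at hab with ha hb hb
  · exact ha.trans hb.symm
  · have key := eq_of_orbitRel_sup_zpowers (t := Equiv.swap x y) φ
      (fun g hg a => by simp only [φ, hπ g hg]) (fun a => by
        by_cases hax : a = x
        · subst hax; simp [φ]
        by_cases hay : a = y
        · subst hay; simp [φ]
        rw [Equiv.swap_apply_of_ne_of_ne hax hay]) (Quotient.eq''.1 (Option.some.inj hab))
    simpa only [φ, id, if_neg ha, if_neg hb] using key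

/-- If `x` and `y` lie in different cycles of `w`, then multiplying by `swap x y` joins them. -/
lemma orbitRel_zpowers_swap_mul {w : Equiv.Perm α} {x y : α}
    (hxy : ¬ orbitRel (zpowers w) α x y) :
    orbitRel (zpowers (Equiv.swap x y * w)) α x y := by
  set G := zpowers (Equiv.swap x y * w)
  have hmem : Equiv.swap x y * w ∈ G := mem_zpowers _
  have hpow : ∀ n : ℕ, orbitRel G α ((w ^ n) x) x := by
    intro n
    induction n with
    | zero => exact (orbitRel G α).refl x
    | succ n ih =>
      by_cases hx : (w ^ (n + 1)) x = x
      · rw [hx]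
      have hy : (w ^ (n + 1)) x ≠ y := fun h => hxy <| (orbitRel _ α).symm <|
        orbitRel_perm_iff.2 ⟨_, pow_mem (mem_zpowers w) _, h⟩
      have h := orbitRel_apply_left hmem ih
      rwa [Equiv.Perm.mul_apply, ← Equiv.Perm.mul_apply w, ← pow_succ',
        Equiv.swap_apply_of_ne_of_ne hx hy] at h
  obtain ⟨n, hn⟩ : ∃ n : ℕ, w ^ n = w⁻¹ := by
    have := inv_mem (mem_zpowers w)
    rwa [← mem_powers_iff_mem_zpowers] at this
  have h := orbitRel_apply_left hmem (hpow n)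
  rw [hn] at h
  simpa using (orbitRel G α).symm h

lemma orbitCount_zpowers_swap_mul_le (w : Equiv.Perm α) (x y : α) :
    orbitCount (zpowers (Equiv.swap x y * w)) ≤ orbitCount (zpowers w) + 1 := by
  exact (orbitCount_le_sup_swap_add_one _ x y).trans
    (Nat.add_le_add_right (orbitCount_anti (zpowers_le_swap_mul_sup w x y)) 1)

lemma orbitCount_zpowers_swap_mul_lt {w : Equiv.Perm α} {x y : α}
    (hxy : ¬ orbitRel (zpowers w) α x y) :
    orbitCount (zpowers (Equiv.swap x y * w)) < orbitCount (zpowers w) := by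
  have hjoin := orbitRel_zpowers_swap_mul hxy
  exact (orbitCount_le_sup_swap hjoin).trans_lt
    (orbitCount_lt (zpowers_le_swap_mul_sup w x y) hxy (orbitRel_mono le_sup_left hjoin))

end Orbits

/-- The number of cycles is invariant under conjugation. -/
lemma orbitCount_zpowers_mul_comm {α : Type*} (f g : Equiv.Perm α) :
    orbitCount (zpowers (f * g)) = orbitCount (zpowers (g * f)) := by
  refine Nat.card_congr (Quotient.congr g fun a b => ?_)
  change orbitRel _ α a b ↔ orbitRel _ α (g a) (g b)
  have hpow : ∀ n : ℤ, (g * f) ^ n * g = g * (f * g) ^ n := fun n => by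
    have h : SemiconjBy g (f * g) (g * f) := by simp [SemiconjBy, mul_assoc]
    exact (h.zpow_right n).symm
  simp only [orbitRel_perm_iff, exists_mem_zpowers, ← Equiv.Perm.mul_apply, hpow]
  simp

/-- Euler-characteristic bound: adjoining `u` to a group `H` containing `v` merges few orbits when
`u` and `u * v` have many cycles. -/
lemma orbitCount_genus_bound {α : Type*} [Fintype α] [DecidableEq α]
    (H : Subgroup (Equiv.Perm α)) {v : Equiv.Perm α} (hv : v ∈ H) (u : Equiv.Perm α) :
    orbitCount (zpowers u) + orbitCount (zpowers (u * v)) + 2 * orbitCount H ≤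
      Nat.card α + orbitCount (zpowers v) + 2 * orbitCount (H ⊔ zpowers u) := by
  induction hn : u.support.card using Nat.strong_induction_on generalizing u with
  | _ n ih =>
  by_cases hu : u = 1
  · subst hu
    have h := orbitCount_zpowers_one (α := α)
    rw [zpowers_one_eq_bot] at h
    simp [h]
  obtain ⟨x, hx⟩ : ∃ x, u x ≠ x := by
    by_contra! h
    exact hu (Equiv.ext h)
  obtain ⟨y, hy⟩ : ∃ y, y = u x := ⟨_, rfl⟩
  obtain ⟨u', hu'⟩ : ∃ u', u' = Equiv.swap x y * u := ⟨_, rfl⟩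
  have huu' : u = Equiv.swap x y * u' := by rw [hu', Equiv.swap_mul_self_mul]
  have hfix : u' x = x := by simp [hu', hy]
  have hlt : u'.support.card < n := by
    rw [hu', ← hn, hy]
    exact Equiv.Perm.card_support_swap_mul hx
  have ih' := ih _ hlt u' rfl
  have hne : ¬ orbitRel (zpowers u') α x y := fun h => by
    obtain ⟨g, ⟨m, rfl⟩, hg⟩ := orbitRel_perm_iff.1 ((orbitRel _ α).symm h)
    have : (u' ^ m) x = x := Equiv.Perm.zpow_apply_eq_self_of_apply_eq_self hfix m
    exact hx (hy ▸ hg.symm.trans this)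
  have hcyc : orbitCount (zpowers u) < orbitCount (zpowers u') := by
    rw [huu']
    exact orbitCount_zpowers_swap_mul_lt hne
  have hsup : H ⊔ zpowers u ≤ H ⊔ zpowers u' ⊔ zpowers (Equiv.swap x y) := by
    refine sup_le (le_sup_left.trans le_sup_left) (zpowers_le.2 ?_)
    rw [huu']
    exact mul_mem (mem_sup_right (mem_zpowers _)) (mem_sup_left (mem_sup_right (mem_zpowers _)))
  have hanti := orbitCount_anti hsup
  have huv : u * v = Equiv.swap x y * (u' * v) := by rw [huu', mul_assoc]
  by_cases hxy : orbitRel (H ⊔ zpowers u' : Subgroup (Equiv.Perm α)) α x y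
  · have h₁ := orbitCount_le_sup_swap hxy
    have h₂ := orbitCount_zpowers_swap_mul_le (u' * v) x y
    rw [← huv] at h₂
    omega
  · have h₁ := orbitCount_le_sup_swap_add_one (H ⊔ zpowers u') x y
    have h₂ : orbitCount (zpowers (u * v)) < orbitCount (zpowers (u' * v)) := by
      rw [huv]
      exact orbitCount_zpowers_swap_mul_lt fun h => hxy <| orbitRel_mono
        (zpowers_le.2 (mul_mem (mem_sup_right (mem_zpowers _)) (mem_sup_left hv))) h
    omega

/-- Bound on the faces through color `0` shared with two bubble colors `a` and `b`. -/
lemma cycleCount_add_cycleCount_le {k D : ℕ} (σ : Fin (D + 1) → Equiv.Perm (Fin k))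
    {a b : Fin (D + 1)} (ha : 0 < a) (hb : 0 < b) :
    cycleCount (σ 0 * (σ a)⁻¹) + cycleCount (σ 0 * (σ b)⁻¹) + 2 * bubbleCompCount σ ≤
      k + cycleCount (σ a * (σ b)⁻¹) + 2 * compCount σ := by
  set H := Subgroup.closure
    {g : Equiv.Perm (Fin k) | ∃ c : Fin (D + 1), 1 < c ∧ g = (σ 1)⁻¹ * σ c}
  set K := Subgroup.closure
    {g : Equiv.Perm (Fin k) | ∃ c : Fin (D + 1), c ≠ 0 ∧ g = (σ 0)⁻¹ * σ c} with hK
  have hone : ∀ c : Fin (D + 1), 0 < c → (σ 1)⁻¹ * σ c ∈ H := fun c hc => by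
    rcases (Fin.one_le_of_ne_zero hc.ne').eq_or_lt with h | h
    · rw [← h, inv_mul_cancel]
      exact one_mem H
    · exact subset_closure ⟨c, h, rfl⟩
  have hmem : ∀ c d : Fin (D + 1), 0 < c → 0 < d → (σ c)⁻¹ * σ d ∈ H := fun c d hc hd => by
    simpa [mul_assoc] using mul_mem (inv_mem (hone c hc)) (hone d hd)
  have hle : K ≤ H ⊔ zpowers ((σ b)⁻¹ * σ 0) := by
    rw [hK, closure_le]
    rintro _ ⟨c, hc, rfl⟩
    have h := mul_mem (inv_mem (mem_sup_right (mem_zpowers ((σ b)⁻¹ * σ 0))))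
      (mem_sup_left (T := zpowers ((σ b)⁻¹ * σ 0)) (hmem b c hb (Fin.pos_of_ne_zero hc)))
    simpa [mul_assoc] using h
  have key := orbitCount_genus_bound H (hmem a b ha hb) ((σ b)⁻¹ * σ 0)
  have hanti : orbitCount (H ⊔ zpowers ((σ b)⁻¹ * σ 0)) ≤ orbitCount K := orbitCount_anti hle
  have hb₀ : orbitCount (zpowers ((σ b)⁻¹ * σ 0)) = cycleCount (σ 0 * (σ b)⁻¹) :=
    orbitCount_zpowers_mul_comm _ _
  have ha₀ : orbitCount (zpowers ((σ b)⁻¹ * σ 0 * ((σ a)⁻¹ * σ b))) =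
      cycleCount (σ 0 * (σ a)⁻¹) := by
    rw [mul_assoc, orbitCount_zpowers_mul_comm, mul_assoc, mul_assoc, mul_inv_cancel, mul_one]
    rfl
  have hab : orbitCount (zpowers ((σ a)⁻¹ * σ b)) = cycleCount (σ a * (σ b)⁻¹) := by
    rw [orbitCount_zpowers_mul_comm, ← zpowers_inv, mul_inv_rev, inv_inv]
    rfl
  have hH : orbitCount H = bubbleCompCount σ := rfl
  have hK' : orbitCount K = compCount σ := rfl
  rw [hb₀, ha₀, hab, hH, Nat.card_fin] at key
  omega

/-- Summing over unordered pairs counts every element once for each other element. -/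
lemma sum_lt_pairs_add {ι : Type*} [LinearOrder ι] (S : Finset ι) (g : ι → ℤ) :
    ∑ p ∈ (S ×ˢ S).filter (fun p => p.1 < p.2), (g p.1 + g p.2) =
      ((S.card : ℤ) - 1) * ∑ a ∈ S, g a := by
  have hsplit : ∀ a ∈ S, ∀ b ∈ S, (if a < b then g a else 0) + (if b < a then g a else 0) =
      g a - if a = b then g a else 0 := fun a _ b _ => by
    rcases lt_trichotomy a b with h | h | h
    · simp [h, h.not_gt, h.ne]
    · simp [h]
    · simp [h, h.not_gt, h.ne']
  calc ∑ p ∈ (S ×ˢ S).filter (fun p => p.1 < p.2), (g p.1 + g p.2)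
      = ∑ a ∈ S, ∑ b ∈ S, (if a < b then g a else 0) +
          ∑ a ∈ S, ∑ b ∈ S, (if a < b then g b else 0) := by
        rw [Finset.sum_add_distrib, Finset.sum_filter, Finset.sum_filter, Finset.sum_product,
          Finset.sum_product]
    _ = ∑ a ∈ S, ∑ b ∈ S, (g a - if a = b then g a else 0) := by
        rw [Finset.sum_comm (f := fun a b => if a < b then g b else 0), ← Finset.sum_add_distrib]
        refine Finset.sum_congr rfl fun a ha => ?_
        rw [← Finset.sum_add_distrib]
        exact Finset.sum_congr rfl (hsplit a ha)
    _ = ∑ a ∈ S, ((S.card : ℤ) - 1) * g a := by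
        refine Finset.sum_congr rfl fun a ha => ?_
        rw [Finset.sum_sub_distrib, Finset.sum_const, Finset.sum_ite_eq, if_pos ha]
        simp only [nsmul_eq_mul]
        ring
    _ = _ := (Finset.mul_sum _ _ _).symm

/-- The faces of `σ` are those of its bubble together with those containing color `0`. -/
lemma faceCount_eq {k D : ℕ} (σ : Fin (D + 1) → Equiv.Perm (Fin k)) :
    faceCount σ =
      ∑ a ∈ Finset.univ.filter (fun a : Fin (D + 1) => 0 < a), cycleCount (σ 0 * (σ a)⁻¹) +
        bubbleFaceCount σ := by
  have h₀ : ∑ a ∈ Finset.univ.filter (fun a : Fin (D + 1) => 0 < a), cycleCount (σ 0 * (σ a)⁻¹) =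
      ∑ p ∈ Finset.univ.filter (fun p : Fin (D + 1) × Fin (D + 1) => p.1 = 0 ∧ p.1 < p.2),
        cycleCount (σ p.1 * (σ p.2)⁻¹) := by
    refine Finset.sum_bij (fun a _ => (0, a)) ?_ ?_ ?_ ?_
    · simp
    · simp
    · rintro ⟨a, b⟩ h
      obtain ⟨rfl, hb⟩ := (Finset.mem_filter.1 h).2
      exact ⟨b, by simpa using hb, rfl⟩
    · simp
  rw [h₀, faceCount, bubbleFaceCount, ← Finset.sum_union]
  · refine Finset.sum_congr (Finset.ext fun p => ?_) fun _ _ => rfl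
    have := eq_zero_or_pos (a := p.1)
    simp only [Finset.mem_union, Finset.mem_filter, Finset.mem_univ, true_and]
    tauto
  · refine Finset.disjoint_left.2 fun p hp hp' => ?_
    simp only [Finset.mem_filter] at hp hp'
    exact hp'.2.1.ne' hp.2.1

/-- Theorem 2 (degree inequality under deletion of the color-0 edges), stated in terms of
face and component counts: `ω(σ) ≥ D·ω(σ_D)` is equivalent to
`(D−1)·(D(D−1)/2·k + D·C(σ) − F(σ)) ≥ D·((D−1)(D−2)/2·k + (D−1)·C_D(σ_D) − F_D(σ_D))`. -/
theorem degree_inequality (k D : ℕ) (hk : 1 ≤ k) (hD : 3 ≤ D)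
    (σ : Fin (D + 1) → Equiv.Perm (Fin k)) :
    (D : ℤ) * (((D - 1) * (D - 2) / 2 : ℕ) * k + (D - 1 : ℤ) * bubbleCompCount σ
        - (bubbleFaceCount σ : ℤ)) ≤
      (D - 1 : ℤ) * (((D * (D - 1) / 2 : ℕ) : ℤ) * k + D * compCount σ
        - (faceCount σ : ℤ)) := by
  set S := Finset.univ.filter (fun a : Fin (D + 1) => 0 < a) with hS
  set P := Finset.univ.filter
    (fun p : Fin (D + 1) × Fin (D + 1) => 0 < p.1 ∧ p.1 < p.2) with hP
  have hPS : P = (S ×ˢ S).filter (fun p => p.1 < p.2) := by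
    ext p
    simp only [hP, hS, Finset.mem_filter, Finset.mem_product, Finset.mem_univ, true_and]
    exact ⟨fun h => ⟨⟨h.1, h.1.trans h.2⟩, h.2⟩, fun h => ⟨h.1.1, h.2⟩⟩
  have hcard : (S.card : ℤ) = D := by
    have : S = Finset.Ioi 0 := by ext; simp only [hS, Finset.mem_filter, Finset.mem_univ, true_and, Finset.mem_Ioi]
    rw [this, Fin.card_Ioi]
    simp
  have hcardP : 2 * (P.card : ℤ) = D * (D - 1) := by
    have h := sum_lt_pairs_add S (fun _ => 1)
    rw [← hPS, Finset.sum_const, Finset.sum_const, hcard, nsmul_eq_mul, nsmul_eq_mul, hcard] at h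
    linarith
  have hzero := sum_lt_pairs_add S fun a => (cycleCount (σ 0 * (σ a)⁻¹) : ℤ)
  rw [← hPS, hcard] at hzero
  have hsum : ∑ p ∈ P, ((cycleCount (σ 0 * (σ p.1)⁻¹) : ℤ) + cycleCount (σ 0 * (σ p.2)⁻¹)) ≤
      ∑ p ∈ P, ((cycleCount (σ p.1 * (σ p.2)⁻¹) : ℤ) +
        (k + 2 * compCount σ - 2 * bubbleCompCount σ)) := by
    refine Finset.sum_le_sum fun p hp => ?_
    obtain ⟨h₁, h₂⟩ := (Finset.mem_filter.1 hp).2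
    have := cycleCount_add_cycleCount_le σ h₁ (h₁.trans h₂)
    zify at this
    linarith
  rw [hzero, Finset.sum_add_distrib, Finset.sum_const, nsmul_eq_mul] at hsum
  have hbubble : (bubbleFaceCount σ : ℤ) = ∑ p ∈ P, (cycleCount (σ p.1 * (σ p.2)⁻¹) : ℤ) := by
    rw [bubbleFaceCount, Nat.cast_sum]
  have hface : (faceCount σ : ℤ) =
      ∑ a ∈ S, (cycleCount (σ 0 * (σ a)⁻¹) : ℤ) + bubbleFaceCount σ := by
    rw [faceCount_eq, Nat.cast_add, Nat.cast_sum]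
  rw [← hbubble] at hsum
  obtain ⟨n, rfl⟩ : ∃ n, D = n + 2 := ⟨D - 2, by omega⟩
  have hchoose : ∀ m : ℕ, 2 * (((m + 1) * m / 2 : ℕ) : ℤ) = (m + 1) * m := fun m => by
    have h : 2 ∣ (m + 1) * m := by
      rw [mul_comm]
      exact (Nat.even_mul_succ_self m).two_dvd
    exact_mod_cast Nat.mul_div_cancel' h
  have h₁ := hchoose n
  have h₂ : 2 * (((n + 2) * (n + 1) / 2 : ℕ) : ℤ) = (n + 2) * (n + 1) := by
    have h := hchoose (n + 1)
    rw [show n + 1 + 1 = n + 2 from rfl] at h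
    rw [h]
    push_cast
    ring
  simp only [Nat.add_sub_cancel, show n + 2 - 1 = n + 1 from rfl]
  rw [hface]
  push_cast at *
  refine le_of_mul_le_mul_left ?_ (two_pos : (0 : ℤ) < 2)
  linear_combination 2 * hsum + (n + 2) * k * h₁ - (n + 1) * k * h₂ +
    (k + 2 * (compCount σ : ℤ) - 2 * bubbleCompCount σ) * hcardP
end

section
/- Degree zero descends to the bubbles: for D ≥ 3 and any (D+1)-tuple σ of permutations of {1,…,k}, if σ has degree zero, i.e. F(σ) = D(D−1)/2 · k + D·C(σ), then its D-bubble also has degree zero, i.e. F_D(σ_D) = (D−1)(D−2)/2 · k + (D−1)·C_D(σ_D). -/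
open Equiv.Perm

section Blocks

variable {α : Type*}

/-- The number of classes of an equivalence relation. -/
noncomputable def blockCount (r : Setoid α) : ℕ := Nat.card (Quotient r)

/-- The rational functions that are constant on the classes of `r`. -/
def classFunctions (r : Setoid α) : Submodule ℚ (α → ℚ) where
  carrier := {f | r ≤ Setoid.ker f}
  add_mem' := by
    intro f g hf hg x y h
    have h₁ : f x = f y := hf h
    have h₂ : g x = g y := hg h
    simp [Setoid.ker_def, h₁, h₂]
  zero_mem' := by
    intro x y _
    simp [Setoid.ker_def]
  smul_mem' := by
    intro c f hf x y h
    have h₁ : f x = f y := hf h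
    simp [Setoid.ker_def, h₁]

lemma mem_classFunctions {r : Setoid α} {f : α → ℚ} :
    f ∈ classFunctions r ↔ r ≤ Setoid.ker f := Iff.rfl

lemma classFunctions_sup (r s : Setoid α) :
    classFunctions (r ⊔ s) = classFunctions r ⊓ classFunctions s := by
  ext f
  simp [mem_classFunctions]

lemma classFunctions_anti {r s : Setoid α} (h : r ≤ s) :
    classFunctions s ≤ classFunctions r := fun _ hf => h.trans hf

lemma le_of_classFunctions_le {r s : Setoid α} (h : classFunctions s ≤ classFunctions r) :
    r ≤ s := by
  classical
  intro x y hxy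
  let f : α → ℚ := fun z => if s x z then 1 else 0
  have hf : f ∈ classFunctions s := by
    intro a b hab
    have : s x a ↔ s x b := ⟨fun h => s.trans h hab, fun h => s.trans h (s.symm hab)⟩
    simp [Setoid.ker_def, f, this]
  have hfxy : f x = f y := h hf hxy
  by_contra hn
  have hn' : ¬ s x y := hn
  simp [f, hn'] at hfxy

/-- The equivalence relation identifying `i` and `j` only. -/
def pairSetoid (i j : α) : Setoid α := Relation.EqvGen.setoid fun a b => a = i ∧ b = j

lemma pairSetoid_le_iff {i j : α} {s : Setoid α} : pairSetoid i j ≤ s ↔ s i j := by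
  constructor
  · intro h
    exact h (Relation.EqvGen.rel _ _ ⟨rfl, rfl⟩)
  · intro h
    refine Setoid.eqvGen_le ?_
    rintro _ _ ⟨rfl, rfl⟩
    exact h

variable [Fintype α]

lemma finrank_classFunctions (r : Setoid α) :
    Module.finrank ℚ (classFunctions r) = blockCount r := by
  classical
  let e : (Quotient r → ℚ) ≃ₗ[ℚ] classFunctions r :=
    { toFun := fun g => ⟨fun x => g (Quotient.mk r x), fun {x y} h => by
        have : Quotient.mk r x = Quotient.mk r y := Quotient.sound h
        simp [Setoid.ker_def, this]⟩
      map_add' := fun _ _ => rfl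
      map_smul' := fun _ _ => rfl
      invFun := fun f q => Quotient.lift f.1 (fun _ _ h => f.2 h) q
      left_inv := fun g => by
        ext q
        induction q using Quotient.inductionOn
        rfl
      right_inv := fun _ => rfl }
  rw [← e.finrank_eq, Module.finrank_fintype_fun_eq_card, blockCount, Nat.card_eq_fintype_card]

lemma blockCount_anti {r s : Setoid α} (h : r ≤ s) : blockCount s ≤ blockCount r := by
  rw [← finrank_classFunctions, ← finrank_classFunctions]
  exact Submodule.finrank_mono (classFunctions_anti h)

lemma blockCount_lt {r s : Setoid α} (h : r ≤ s) (hne : ¬ s ≤ r) :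
    blockCount s < blockCount r := by
  rw [← finrank_classFunctions, ← finrank_classFunctions]
  exact Submodule.finrank_lt_finrank_of_lt
    (lt_of_le_not_ge (classFunctions_anti h) fun h' => hne (le_of_classFunctions_le h'))

/-- Merging with a third relation does not increase the number of classes lost between two
comparable relations. -/
lemma blockCount_sup_add_le {r s : Setoid α} (h : r ≤ s) (p : Setoid α) :
    blockCount (r ⊔ p) + blockCount s ≤ blockCount r + blockCount (s ⊔ p) := by
  simp only [← finrank_classFunctions]
  rw [classFunctions_sup, classFunctions_sup]
  have hdim := Submodule.finrank_sup_add_finrank_inf_eq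
    (classFunctions r ⊓ classFunctions p) (classFunctions s)
  have hinf : classFunctions r ⊓ classFunctions p ⊓ classFunctions s =
      classFunctions s ⊓ classFunctions p := by
    rw [inf_right_comm, inf_eq_right.2 (classFunctions_anti h)]
  have hle := Submodule.finrank_mono (R := ℚ) (sup_le inf_le_left (classFunctions_anti h) :
    classFunctions r ⊓ classFunctions p ⊔ classFunctions s ≤ classFunctions r)
  rw [hinf] at hdim
  omega

lemma card_le_blockCount_pairSetoid (i j : α) :
    Fintype.card α ≤ blockCount (pairSetoid i j) + 1 := by
  classical
  let φ : (α → ℚ) →ₗ[ℚ] ℚ := LinearMap.proj (R := ℚ) (φ := fun _ : α => ℚ) i -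
    LinearMap.proj (R := ℚ) (φ := fun _ : α => ℚ) j
  have hker : classFunctions (pairSetoid i j) = LinearMap.ker φ := by
    ext f
    rw [mem_classFunctions, pairSetoid_le_iff, Setoid.ker_def]
    simp [φ, sub_eq_zero]
  have hrank := φ.finrank_range_add_finrank_ker
  have hrange : Module.finrank ℚ (LinearMap.range φ) ≤ 1 := by
    simpa using Submodule.finrank_le (LinearMap.range φ)
  rw [← hker, finrank_classFunctions, Module.finrank_fintype_fun_eq_card] at hrank
  omega

lemma blockCount_bot : blockCount (⊥ : Setoid α) = Fintype.card α := by
  have htop : classFunctions (⊥ : Setoid α) = ⊤ :=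
    eq_top_iff.2 fun _ _ => mem_classFunctions.2 bot_le
  rw [← finrank_classFunctions, htop, finrank_top, Module.finrank_fintype_fun_eq_card]

lemma blockCount_le_sup_pairSetoid (r : Setoid α) (i j : α) :
    blockCount r ≤ blockCount (r ⊔ pairSetoid i j) + 1 := by
  have h := blockCount_sup_add_le (bot_le : ⊥ ≤ pairSetoid i j) r
  have h' := card_le_blockCount_pairSetoid i j
  rw [bot_sup_eq, blockCount_bot, sup_comm] at h
  omega

end Blocks

section Cycles

variable {α : Type*} [Fintype α]

lemma sameCycle_setoid_le_iff {τ : Equiv.Perm α} {s : Setoid α} :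
    SameCycle.setoid τ ≤ s ↔ ∀ x, s x (τ x) := by
  constructor
  · intro h x
    exact h (show SameCycle τ x (τ x) from (sameCycle_apply_right).2 (SameCycle.refl τ x))
  · intro h x y hxy
    obtain ⟨n, rfl⟩ := SameCycle.exists_nat_pow_eq (show SameCycle τ x y from hxy)
    clear hxy
    induction n with
    | zero => exact s.refl x
    | succ n ih =>
      rw [pow_succ', mul_apply]
      exact s.trans ih (h _)

lemma sameCycle_setoid_apply (τ : Equiv.Perm α) (x : α) : SameCycle.setoid τ x (τ x) :=
  sameCycle_setoid_le_iff.1 le_rfl x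

variable [DecidableEq α]

lemma sameCycle_setoid_swap_mul_le_s8 (τ : Equiv.Perm α) (i j : α) :
    SameCycle.setoid (Equiv.swap i j * τ) ≤ SameCycle.setoid τ ⊔ pairSetoid i j := by
  have hτ : ∀ x, (SameCycle.setoid τ ⊔ pairSetoid i j) x (τ x) :=
    sameCycle_setoid_le_iff.1 le_sup_left
  have hij : (SameCycle.setoid τ ⊔ pairSetoid i j) i j := pairSetoid_le_iff.1 le_sup_right
  rw [sameCycle_setoid_le_iff]
  intro x
  have hx := hτ x
  rw [mul_apply, Equiv.swap_apply_def]
  split_ifs with h₁ h₂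
  · rw [h₁] at hx
    exact Setoid.trans' _ hx hij
  · rw [h₂] at hx
    exact Setoid.trans' _ hx (Setoid.symm' _ hij)
  · exact hx

lemma sameCycle_setoid_le_swap_mul (τ : Equiv.Perm α) (i j : α) :
    SameCycle.setoid τ ≤ SameCycle.setoid (Equiv.swap i j * τ) ⊔ pairSetoid i j := by
  simpa using sameCycle_setoid_swap_mul_le_s8 (Equiv.swap i j * τ) i j

/-- Multiplying by the transposition of two points of different cycles joins these cycles. -/
lemma sameCycle_swap_mul {τ : Equiv.Perm α} {i j : α} (h : ¬ SameCycle τ i j) :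
    SameCycle (Equiv.swap i j * τ) i j := by
  have key : ∀ m : ℕ, SameCycle (Equiv.swap i j * τ) j ((τ ^ m) j) := by
    intro m
    induction m with
    | zero => exact SameCycle.refl _ _
    | succ m ih =>
      by_cases hj : (τ ^ (m + 1)) j = j
      · rw [hj]
      · have hi : (τ ^ (m + 1)) j ≠ i := fun hi =>
          h (SameCycle.symm ⟨(m + 1 : ℕ), by rw [zpow_natCast, hi]⟩)
        have hstep := (sameCycle_apply_right (f := Equiv.swap i j * τ)).2 ih
        rwa [mul_apply, ← mul_apply τ, ← pow_succ', Equiv.swap_apply_of_ne_of_ne hi hj] at hstep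
  have hinv : SameCycle τ j (τ⁻¹ j) := ⟨-1, by rw [zpow_neg_one]⟩
  obtain ⟨m, hm⟩ : ∃ m : ℕ, (τ ^ m) j = τ⁻¹ j := hinv.exists_nat_pow_eq
  have hlast := (sameCycle_apply_right (f := Equiv.swap i j * τ)).2 (key m)
  rw [hm, mul_apply, ← mul_apply τ, mul_inv_cancel, one_apply, Equiv.swap_apply_right] at hlast
  exact hlast.symm

lemma blockCount_swap_mul_lt {τ : Equiv.Perm α} {i j : α} (h : ¬ SameCycle τ i j) :
    blockCount (SameCycle.setoid (Equiv.swap i j * τ)) < blockCount (SameCycle.setoid τ) := by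
  have hij : SameCycle.setoid (Equiv.swap i j * τ) i j := sameCycle_swap_mul h
  refine blockCount_lt ((sameCycle_setoid_le_swap_mul τ i j).trans
    (sup_le le_rfl (pairSetoid_le_iff.2 hij))) fun hle => h (hle hij)

/-- Nonnegativity of the genus of the bipartite map encoded by two permutations. -/
lemma blockCount_add_mul_le (a b : Equiv.Perm α) :
    blockCount (SameCycle.setoid a) + blockCount (SameCycle.setoid b) +
        blockCount (SameCycle.setoid (b * a)) ≤
      Fintype.card α + 2 * blockCount (SameCycle.setoid a ⊔ SameCycle.setoid b) := by
  induction hn : b.support.card using Nat.strong_induction_on generalizing b with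
  | _ n ih =>
    by_cases hb : b = 1
    · subst hb
      have hbot : SameCycle.setoid (1 : Equiv.Perm α) = ⊥ :=
        le_bot_iff.1 (sameCycle_setoid_le_iff.2 fun x => Setoid.refl' _ x)
      rw [one_mul, hbot, blockCount_bot, sup_bot_eq]
      omega
    · obtain ⟨i, hi⟩ : ∃ i, b i ≠ i := by
        by_contra! hall
        exact hb (Equiv.ext hall)
      set j := b i with hj
      set b' := Equiv.swap i j * b with hb'
      have hbb' : b = Equiv.swap i j * b' := by simp [hb']
      have hfix : b' i = i := by simp [hb', ← hj]
      have hcard : b'.support.card < n := hn ▸ card_support_swap_mul hi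
      have IH := ih _ hcard b' rfl
      have hnb : ¬ SameCycle b' i j := fun h =>
        hi ((h.eq_of_left hfix).symm)
      have hlt : blockCount (SameCycle.setoid b) < blockCount (SameCycle.setoid b') := by
        rw [hbb']
        exact blockCount_swap_mul_lt hnb
      have hij : SameCycle.setoid b i j := sameCycle_setoid_apply b i
      have hba : b * a = Equiv.swap i j * (b' * a) := by rw [← mul_assoc, ← hbb']
      have hle : SameCycle.setoid b ≤ SameCycle.setoid b' ⊔ pairSetoid i j := by
        conv_lhs => rw [hbb']
        exact sameCycle_setoid_swap_mul_le_s8 b' i j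
      by_cases hR : (SameCycle.setoid a ⊔ SameCycle.setoid b') i j
      · have h₁ := blockCount_le_sup_pairSetoid (SameCycle.setoid (b * a)) i j
        have h₂ : blockCount (SameCycle.setoid (b * a) ⊔ pairSetoid i j) ≤
            blockCount (SameCycle.setoid (b' * a)) := by
          rw [hba]
          exact blockCount_anti (sameCycle_setoid_le_swap_mul _ i j)
        have h₃ : blockCount (SameCycle.setoid a ⊔ SameCycle.setoid b') ≤
            blockCount (SameCycle.setoid a ⊔ SameCycle.setoid b) :=
          blockCount_anti (sup_le le_sup_left
            (hle.trans (sup_le le_sup_right (pairSetoid_le_iff.2 hR))))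
        omega
      · have hsub : SameCycle.setoid (b' * a) ≤ SameCycle.setoid a ⊔ SameCycle.setoid b' := by
          rw [sameCycle_setoid_le_iff]
          intro x
          exact Setoid.trans' _
            (sameCycle_setoid_le_iff.1 (le_sup_left :
              _ ≤ SameCycle.setoid a ⊔ SameCycle.setoid b') x)
            (sameCycle_setoid_le_iff.1 (le_sup_right :
              _ ≤ SameCycle.setoid a ⊔ SameCycle.setoid b') (a x))
        have h₁ : blockCount (SameCycle.setoid (b * a)) <
            blockCount (SameCycle.setoid (b' * a)) := by
          rw [hba]
          exact blockCount_swap_mul_lt fun h => hR (hsub h)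
        have h₂ := blockCount_le_sup_pairSetoid (SameCycle.setoid a ⊔ SameCycle.setoid b') i j
        have h₃ : blockCount (SameCycle.setoid a ⊔ SameCycle.setoid b' ⊔ pairSetoid i j) ≤
            blockCount (SameCycle.setoid a ⊔ SameCycle.setoid b) :=
          blockCount_anti (sup_le (le_sup_left.trans le_sup_left)
            (hle.trans (sup_le (le_sup_right.trans le_sup_left) le_sup_right)))
        omega

end Cycles

section ColoredGraph

variable {ι α : Type*}

/-- The connectivity relation on white vertices of the graph restricted to the colors in `T`. -/
def colorSetoid (σ : ι → Equiv.Perm α) (T : Finset ι) : Setoid α :=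
  Relation.EqvGen.setoid fun x y => ∃ a ∈ T, ∃ b ∈ T, y = ((σ a)⁻¹ * σ b) x

lemma colorSetoid_le_iff {σ : ι → Equiv.Perm α} {T : Finset ι} {s : Setoid α} :
    colorSetoid σ T ≤ s ↔ ∀ a ∈ T, ∀ b ∈ T, ∀ x, s x (((σ a)⁻¹ * σ b) x) := by
  constructor
  · intro h a ha b hb x
    exact h (Relation.EqvGen.rel _ _ ⟨a, ha, b, hb, rfl⟩)
  · intro h
    refine Setoid.eqvGen_le ?_
    rintro x _ ⟨a, ha, b, hb, rfl⟩
    exact h a ha b hb x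

/-- It suffices to compare every color with a fixed one. -/
lemma colorSetoid_le_of_base {σ : ι → Equiv.Perm α} {T : Finset ι} {s : Setoid α} (c : ι)
    (h : ∀ b ∈ T, ∀ x, s x (((σ c)⁻¹ * σ b) x)) : colorSetoid σ T ≤ s := by
  rw [colorSetoid_le_iff]
  intro a ha b hb x
  have h₁ := h b hb x
  have h₂ := h a ha (((σ a)⁻¹ * σ b) x)
  have hmul : (σ c)⁻¹ * σ a * ((σ a)⁻¹ * σ b) = (σ c)⁻¹ * σ b := by group
  rw [← mul_apply, hmul] at h₂
  exact s.trans h₁ (s.symm h₂)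

lemma colorSetoid_apply (σ : ι → Equiv.Perm α) {T : Finset ι} {a b : ι} (ha : a ∈ T)
    (hb : b ∈ T) (x : α) : colorSetoid σ T x (((σ a)⁻¹ * σ b) x) :=
  colorSetoid_le_iff.1 le_rfl a ha b hb x

lemma colorSetoid_mono (σ : ι → Equiv.Perm α) {S T : Finset ι} (h : S ⊆ T) :
    colorSetoid σ S ≤ colorSetoid σ T :=
  colorSetoid_le_iff.2 fun _ ha _ hb x => colorSetoid_apply σ (h ha) (h hb) x

variable [DecidableEq ι]

lemma colorSetoid_pair [Fintype α] (σ : ι → Equiv.Perm α) (a b : ι) :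
    colorSetoid σ {a, b} = SameCycle.setoid ((σ a)⁻¹ * σ b) := by
  apply le_antisymm
  · refine colorSetoid_le_of_base a fun c hc x => ?_
    rcases Finset.mem_insert.1 hc with rfl | hc
    · simp
    · rw [Finset.mem_singleton.1 hc]
      exact sameCycle_setoid_apply _ x
  · rw [sameCycle_setoid_le_iff]
    exact colorSetoid_apply σ (by simp) (by simp)

lemma colorSetoid_insert_le (σ : ι → Equiv.Perm α) {S T : Finset ι} {z c : ι} (hS : c ∈ S)
    (hT : c ∈ T) :
    colorSetoid σ (insert z T) ≤ colorSetoid σ (insert z S) ⊔ colorSetoid σ T := by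
  refine colorSetoid_le_of_base c fun b hb x => ?_
  rcases Finset.mem_insert.1 hb with rfl | hb
  · exact (le_sup_left : _ ≤ colorSetoid σ (insert b S) ⊔ colorSetoid σ T)
      (colorSetoid_apply σ (Finset.mem_insert_of_mem hS) (Finset.mem_insert_self _ _) x)
  · exact (le_sup_right : _ ≤ colorSetoid σ (insert z S) ⊔ colorSetoid σ T)
      (colorSetoid_apply σ hT hb x)

/-- The number of faces with colors in `T`, each counted once for each order of its colors. -/
noncomputable def orderedFaceCount (σ : ι → Equiv.Perm α) (T : Finset ι) : ℤ :=
  ∑ c ∈ T, ∑ d ∈ T.erase c, (blockCount (colorSetoid σ {c, d}) : ℤ)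

lemma orderedFaceCount_insert (σ : ι → Equiv.Perm α) {T : Finset ι} {z : ι} (hz : z ∉ T) :
    orderedFaceCount σ (insert z T) =
      orderedFaceCount σ T + 2 * ∑ c ∈ T, (blockCount (colorSetoid σ {z, c}) : ℤ) := by
  have hrow : ∀ c ∈ T, ∑ d ∈ (insert z T).erase c, (blockCount (colorSetoid σ {c, d}) : ℤ) =
      blockCount (colorSetoid σ {z, c}) +
        ∑ d ∈ T.erase c, (blockCount (colorSetoid σ {c, d}) : ℤ) := by
    intro c hc
    have hne : z ≠ c := fun h => hz (h ▸ hc)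
    rw [Finset.erase_insert_of_ne hne,
      Finset.sum_insert (fun h => hz (Finset.mem_of_mem_erase h)), Finset.pair_comm c z]
  rw [orderedFaceCount, Finset.sum_insert hz, Finset.erase_insert hz, Finset.sum_congr rfl hrow,
    Finset.sum_add_distrib, ← orderedFaceCount]
  ring

variable [Fintype α]

/-- The faces gained by drawing the edges of color `z` between those of colors `c` and `d`. -/
lemma blockCount_insert_le (σ : ι → Equiv.Perm α) {T : Finset ι} {c d : ι} (z : ι) (hc : c ∈ T)
    (hd : d ∈ T) :
    blockCount (colorSetoid σ {z, c}) + blockCount (colorSetoid σ {z, d}) +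
        2 * blockCount (colorSetoid σ T) ≤
      Fintype.card α + blockCount (colorSetoid σ {c, d}) +
        2 * blockCount (colorSetoid σ (insert z T)) := by
  classical
  have hgenus := blockCount_add_mul_le ((σ c)⁻¹ * σ d) ((σ z)⁻¹ * σ c)
  have hmul : (σ z)⁻¹ * σ c * ((σ c)⁻¹ * σ d) = (σ z)⁻¹ * σ d := by group
  rw [hmul, ← colorSetoid_pair, ← colorSetoid_pair, ← colorSetoid_pair] at hgenus
  have hjoin : blockCount (colorSetoid σ {c, d} ⊔ colorSetoid σ {z, c}) ≤
      blockCount (colorSetoid σ {z, c, d}) := by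
    refine blockCount_anti ((colorSetoid_insert_le σ (S := {c}) (c := c) (by simp)
      (by simp)).trans ?_)
    rw [sup_comm]
  have hcd : ({c, d} : Finset ι) ⊆ T := by
    simp [Finset.insert_subset_iff, hc, hd]
  have hsub := blockCount_sup_add_le
    (colorSetoid_mono σ (Finset.subset_insert z {c, d})) (colorSetoid σ T)
  rw [sup_eq_right.2 (colorSetoid_mono σ hcd)] at hsub
  have hins : blockCount (colorSetoid σ {z, c, d} ⊔ colorSetoid σ T) ≤
      blockCount (colorSetoid σ (insert z T)) :=
    blockCount_anti (colorSetoid_insert_le σ (c := c) (by simp) hc)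
  omega

lemma sum_insert_faces_le (σ : ι → Equiv.Perm α) (T : Finset ι) (z : ι) :
    2 * ((T.card : ℤ) - 1) * ∑ c ∈ T, (blockCount (colorSetoid σ {z, c}) : ℤ) +
        2 * (T.card * ((T.card : ℤ) - 1)) * blockCount (colorSetoid σ T) ≤
      T.card * ((T.card : ℤ) - 1) *
          (Fintype.card α + 2 * blockCount (colorSetoid σ (insert z T))) +
        orderedFaceCount σ T := by
  have hsum : ∑ c ∈ T, ∑ d ∈ T.erase c,
      ((blockCount (colorSetoid σ {z, c}) : ℤ) + blockCount (colorSetoid σ {z, d}) +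
        2 * blockCount (colorSetoid σ T)) ≤
      ∑ c ∈ T, ∑ d ∈ T.erase c, ((Fintype.card α : ℤ) +
        blockCount (colorSetoid σ {c, d}) +
        2 * blockCount (colorSetoid σ (insert z T))) := by
    refine Finset.sum_le_sum fun c hc => Finset.sum_le_sum fun d hd => ?_
    exact_mod_cast blockCount_insert_le σ z hc (Finset.mem_of_mem_erase hd)
  have hconst : ∀ x : ℤ, ∑ c ∈ T, ∑ _d ∈ T.erase c, x = T.card * ((T.card : ℤ) - 1) * x := by
    intro x
    rw [Finset.sum_congr rfl fun c hc => Finset.sum_erase_eq_sub (f := fun _ => x) hc]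
    simp
    ring
  have hfst : ∀ f : ι → ℤ, ∑ c ∈ T, ∑ _d ∈ T.erase c, f c =
      ((T.card : ℤ) - 1) * ∑ c ∈ T, f c := by
    intro f
    rw [Finset.sum_congr rfl fun c hc => Finset.sum_erase_eq_sub (f := fun _ => f c) hc]
    simp [← Finset.mul_sum]
    ring
  have hsnd : ∀ f : ι → ℤ, ∑ c ∈ T, ∑ d ∈ T.erase c, f d =
      ((T.card : ℤ) - 1) * ∑ c ∈ T, f c := by
    intro f
    rw [Finset.sum_congr rfl fun c hc => Finset.sum_erase_eq_sub (f := f) hc]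
    simp
    ring
  simp only [Finset.sum_add_distrib, hconst, hfst, hsnd] at hsum
  rw [← orderedFaceCount] at hsum
  linarith

/-- Nonnegativity of the degree. -/
lemma orderedFaceCount_le (σ : ι → Equiv.Perm α) {T : Finset ι} (hT : T.Nonempty) :
    orderedFaceCount σ T ≤ ((T.card : ℤ) - 1) * (T.card - 2) * Fintype.card α +
      2 * (T.card - 1) * blockCount (colorSetoid σ T) := by
  induction hT using Finset.Nonempty.cons_induction with
  | singleton a => simp [orderedFaceCount]
  | cons z T hz hT ih =>
    rw [Finset.cons_eq_insert, orderedFaceCount_insert σ hz, Finset.card_insert_of_notMem hz]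
    have hstep := sum_insert_faces_le σ T z
    obtain ⟨m, hm⟩ : ∃ m, T.card = m + 1 := Nat.exists_eq_succ_of_ne_zero hT.card_pos.ne'
    rcases Nat.eq_zero_or_pos m with rfl | hpos
    · obtain ⟨c, rfl⟩ := Finset.card_eq_one.1 hm
      simp [orderedFaceCount]
    · rw [hm] at hstep ih ⊢
      push_cast at hstep ih ⊢
      have hpos' : (0 : ℤ) < m := by exact_mod_cast hpos
      refine le_of_mul_le_mul_left ?_ hpos'
      nlinarith [mul_le_mul_of_nonneg_left ih (by positivity : (0 : ℤ) ≤ m + 1)]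

/-- Vanishing of the degree is inherited by the graph with one color deleted. -/
lemma orderedFaceCount_eq_of_insert (σ : ι → Equiv.Perm α) {T : Finset ι} {z : ι} (hz : z ∉ T)
    (hT : T.Nonempty)
    (h : orderedFaceCount σ (insert z T) = (T.card : ℤ) * (T.card - 1) * Fintype.card α +
      2 * T.card * blockCount (colorSetoid σ (insert z T))) :
    orderedFaceCount σ T = ((T.card : ℤ) - 1) * (T.card - 2) * Fintype.card α +
      2 * (T.card - 1) * blockCount (colorSetoid σ T) := by
  refine le_antisymm (orderedFaceCount_le σ hT) ?_
  have hstep := sum_insert_faces_le σ T z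
  rw [orderedFaceCount_insert σ hz] at h
  have hpos : (0 : ℤ) < T.card := by exact_mod_cast hT.card_pos
  refine le_of_mul_le_mul_left ?_ hpos
  linear_combination hstep - ((T.card : ℤ) - 1) * h

end ColoredGraph

section Bridge

variable {k D : ℕ}

lemma orbitRel_closure_le_iff {S : Set (Equiv.Perm (Fin k))} {s : Setoid (Fin k)} :
    MulAction.orbitRel (Subgroup.closure S) (Fin k) ≤ s ↔ ∀ g ∈ S, ∀ x, s x (g x) := by
  constructor
  · intro h g hg x
    exact s.symm (h (show g x ∈ MulAction.orbit (Subgroup.closure S) x from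
      ⟨⟨g, Subgroup.subset_closure hg⟩, rfl⟩))
  · rintro h _ y ⟨⟨g, hg⟩, rfl⟩
    suffices H : ∀ x, s x (g x) from s.symm (H y)
    induction hg using Subgroup.closure_induction with
    | mem g hg => exact h g hg
    | one => exact s.refl
    | mul a b _ _ iha ihb => exact fun x => s.trans (ihb x) (iha (b x))
    | inv a _ iha => exact fun x => s.symm (by simpa using iha (a⁻¹ x))

lemma card_orbits_closure (σ : Fin (D + 1) → Equiv.Perm (Fin k)) (T : Finset (Fin (D + 1)))
    {c : Fin (D + 1)} (hc : c ∈ T) {S : Set (Equiv.Perm (Fin k))}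
    (hS : S = {g | ∃ b, b ∈ T.erase c ∧ g = (σ c)⁻¹ * σ b}) :
    Nat.card (MulAction.orbitRel.Quotient (Subgroup.closure S) (Fin k)) =
      blockCount (colorSetoid σ T) := by
  have hrel : MulAction.orbitRel (Subgroup.closure S) (Fin k) = colorSetoid σ T := by
    apply le_antisymm
    · rw [orbitRel_closure_le_iff, hS]
      rintro _ ⟨b, hb, rfl⟩
      exact colorSetoid_apply σ hc (Finset.mem_of_mem_erase hb)
    · refine colorSetoid_le_of_base c fun b hb x => ?_
      by_cases hbc : b = c
      · subst hbc
        simp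
      · exact orbitRel_closure_le_iff.1 le_rfl _
          (hS ▸ ⟨b, Finset.mem_erase.2 ⟨hbc, hb⟩, rfl⟩) x
  rw [blockCount, ← hrel]

lemma cycleCount_eq_blockCount (τ : Equiv.Perm (Fin k)) :
    cycleCount τ = blockCount (SameCycle.setoid τ) := by
  have hrel : MulAction.orbitRel (Subgroup.zpowers τ) (Fin k) = SameCycle.setoid τ := by
    rw [Subgroup.zpowers_eq_closure]
    apply le_antisymm
    · rw [orbitRel_closure_le_iff]
      rintro _ rfl
      exact sameCycle_setoid_apply _
    · rw [sameCycle_setoid_le_iff]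
      exact orbitRel_closure_le_iff.1 le_rfl τ rfl
  rw [blockCount, ← hrel]
  rfl

/-- The faces of colors `a` and `b` may be counted on white or on black vertices. -/
lemma cycleCount_mul_inv (σ : Fin (D + 1) → Equiv.Perm (Fin k)) (a b : Fin (D + 1)) :
    cycleCount (σ a * (σ b)⁻¹) = blockCount (colorSetoid σ {a, b}) := by
  rw [cycleCount_eq_blockCount, Finset.pair_comm, colorSetoid_pair]
  refine Nat.card_congr (Quotient.congr (σ b)⁻¹ fun x y => ?_)
  change SameCycle _ x y ↔ SameCycle _ _ _
  have hconj : (σ b)⁻¹ * σ a = (σ b)⁻¹ * (σ a * (σ b)⁻¹) * ((σ b)⁻¹)⁻¹ := by group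
  rw [hconj, sameCycle_conj]
  simp

lemma two_mul_sum_lt (σ : Fin (D + 1) → Equiv.Perm (Fin k)) (T : Finset (Fin (D + 1))) :
    2 * ((∑ p ∈ (T ×ˢ T).filter (fun p => p.1 < p.2), cycleCount (σ p.1 * (σ p.2)⁻¹) : ℕ) : ℤ) =
      orderedFaceCount σ T := by
  have hsplit : orderedFaceCount σ T =
      ∑ c ∈ T, ∑ d ∈ T, (if c < d then (blockCount (colorSetoid σ {c, d}) : ℤ) else 0) +
      ∑ c ∈ T, ∑ d ∈ T, (if d < c then (blockCount (colorSetoid σ {c, d}) : ℤ) else 0) := by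
    simp only [orderedFaceCount, ← Finset.sum_add_distrib]
    refine Finset.sum_congr rfl fun c hc => ?_
    rw [← Finset.sum_erase (s := T) (a := c) (by simp)]
    refine Finset.sum_congr rfl fun d hd => ?_
    rcases lt_or_gt_of_ne (Finset.ne_of_mem_erase hd) with h | h <;> simp [h, h.not_gt]
  have hswap : ∑ c ∈ T, ∑ d ∈ T,
      (if d < c then (blockCount (colorSetoid σ {c, d}) : ℤ) else 0) =
      ∑ c ∈ T, ∑ d ∈ T, (if c < d then (blockCount (colorSetoid σ {c, d}) : ℤ) else 0) := by
    rw [Finset.sum_comm]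
    simp only [Finset.pair_comm]
  rw [hsplit, hswap, Finset.sum_filter, Finset.sum_product]
  push_cast [cycleCount_mul_inv]
  ring

end Bridge


/-- Degree zero descends to the bubbles: if `σ` has degree zero, i.e.
`F(σ) = D(D−1)/2·k + D·C(σ)`, then so does its `D`-bubble, i.e.
`F_D(σ_D) = (D−1)(D−2)/2·k + (D−1)·C_D(σ_D)`. -/
theorem degree_zero_descends (k D : ℕ) (hk : 1 ≤ k) (hD : 3 ≤ D)
    (σ : Fin (D + 1) → Equiv.Perm (Fin k))
    (hdeg : faceCount σ = D * (D - 1) / 2 * k + D * compCount σ) :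
    bubbleFaceCount σ = (D - 1) * (D - 2) / 2 * k + (D - 1) * bubbleCompCount σ := by
  have hT : (Finset.univ.erase (0 : Fin (D + 1))).card = D := by simp
  have hone : (1 : Fin (D + 1)) ≠ 0 := by
    rw [Ne, Fin.ext_iff, Fin.val_one', Fin.val_zero, Nat.mod_eq_of_lt (by omega)]
    omega
  have hmem : (1 : Fin (D + 1)) ∈ Finset.univ.erase (0 : Fin (D + 1)) := by simp [hone]
  have hins : insert (0 : Fin (D + 1)) (Finset.univ.erase (0 : Fin (D + 1))) = Finset.univ := by simp
  have hcomp : compCount σ = blockCount (colorSetoid σ Finset.univ) :=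
    card_orbits_closure σ _ (Finset.mem_univ 0) (by simp)
  have hbcomp : bubbleCompCount σ = blockCount (colorSetoid σ (Finset.univ.erase 0)) := by
    refine card_orbits_closure σ _ hmem ?_
    have hlt : ∀ b : Fin (D + 1), 1 < b ↔ b ≠ 1 ∧ b ≠ 0 := by
      intro b
      rw [Fin.lt_def, Ne, Ne, Fin.ext_iff, Fin.ext_iff, Fin.val_one', Fin.val_zero,
        Nat.mod_eq_of_lt (by omega)]
      omega
    simp [hlt]
  have hface : 2 * (faceCount σ : ℤ) = orderedFaceCount σ Finset.univ := by
    rw [← two_mul_sum_lt, Finset.univ_product_univ, faceCount]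
  have hbface : 2 * (bubbleFaceCount σ : ℤ) = orderedFaceCount σ (Finset.univ.erase 0) := by
    rw [← two_mul_sum_lt, bubbleFaceCount]
    congr 3
    ext p
    simp only [Finset.mem_filter, Finset.mem_univ, true_and, Finset.mem_product,
      Finset.mem_erase, and_true, Fin.pos_iff_ne_zero]
    exact ⟨fun h => ⟨⟨h.1, (Fin.pos_iff_ne_zero.2 h.1 |>.trans h.2).ne'⟩, h.2⟩,
      fun h => ⟨h.1.1, h.2⟩⟩
  obtain ⟨n, rfl⟩ : ∃ n, D = n + 2 := ⟨D - 2, by omega⟩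
  have heven : 2 * ((n + 2) * (n + 2 - 1) / 2) = (n + 2) * (n + 1) :=
    Nat.mul_div_cancel' (by simpa [mul_comm] using (Nat.even_mul_succ_self (n + 1)).two_dvd)
  have heven' : 2 * ((n + 2 - 1) * (n + 2 - 2) / 2) = (n + 1) * n :=
    Nat.mul_div_cancel' (by simpa [mul_comm] using (Nat.even_mul_succ_self n).two_dvd)
  have hzero := orderedFaceCount_eq_of_insert σ (Finset.notMem_erase 0 Finset.univ) ⟨1, hmem⟩
  rw [hins, hT, ← hface, ← hbface, ← hcomp, ← hbcomp, hdeg, Fintype.card_fin] at hzero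
  generalize (n + 2) * (n + 2 - 1) / 2 = A at heven hzero
  generalize (n + 2 - 1) * (n + 2 - 2) / 2 = B at heven' ⊢
  rw [show n + 2 - 1 = n + 1 from rfl]
  zify at heven heven' ⊢
  push_cast at hzero
  have hres := hzero (by linear_combination (k : ℤ) * heven)
  refine mul_left_cancel₀ (two_ne_zero (α := ℤ)) ?_
  linear_combination hres - (k : ℤ) * heven'
end

section
/- Master bound on the N-exponent: for D ≥ 2 and any (D+1)-tuple σ of permutations of {1,…,k}, the exponent of N appearing in the Gaussian average of the trace invariant satisfies −(D−1)·k + F(σ) − F_D(σ_D) ≤ D·C(σ) − (D−1)·C_D(σ_D). -/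
namespace ColoredGraph

open Equiv MulAction

variable {α : Type*}

/-- Every point is `s`-equivalent to its image under `g`. -/
def Respects (s : Setoid α) (g : Perm α) : Prop := ∀ x, s x (g x)

theorem Respects.mul {s : Setoid α} {g h : Perm α} (hg : Respects s g) (hh : Respects s h) :
    Respects s (g * h) :=
  fun x => s.trans (hh x) (hg (h x))

theorem Respects.inv {s : Setoid α} {g : Perm α} (hg : Respects s g) : Respects s g⁻¹ :=
  fun x => by simpa using s.symm (hg (g⁻¹ x))

theorem Respects.one (s : Setoid α) : Respects s 1 := s.refl

theorem Respects.mono {s t : Setoid α} (hst : s ≤ t) {g : Perm α} (hg : Respects s g) :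
    Respects t g :=
  fun x => hst (hg x)

theorem Respects.swap [DecidableEq α] {s : Setoid α} {a b : α} (h : s a b) :
    Respects s (swap a b) := by
  intro x
  rcases em (x = a) with rfl | hxa
  · simpa using h
  · rcases em (x = b) with rfl | hxb
    · simpa using s.symm h
    · rw [swap_apply_of_ne_of_ne hxa hxb]

theorem respects_orbitRel {H : Subgroup (Perm α)} {g : Perm α} (hg : g ∈ H) :
    Respects (orbitRel H α) g :=
  fun _ => (orbitRel H α).symm ⟨⟨g, hg⟩, rfl⟩

theorem orbitRel_closure_le {S : Set (Perm α)} {w : Setoid α} (h : ∀ g ∈ S, Respects w g) :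
    orbitRel (Subgroup.closure S) α ≤ w := by
  have key : ∀ g ∈ Subgroup.closure S, Respects w g := fun g hg => by
    induction hg using Subgroup.closure_induction with
    | mem g hg => exact h g hg
    | one => exact Respects.one w
    | mul g h _ _ hg hh => exact hg.mul hh
    | inv g _ hg => exact hg.inv
  rintro x y ⟨⟨g, hg⟩, rfl⟩
  exact w.symm (key g hg y)

/-- The partition into the cycles of `p`. -/
abbrev cycles (p : Perm α) : Setoid α := orbitRel (Subgroup.zpowers p) α

theorem cycles_le {p : Perm α} {w : Setoid α} : cycles p ≤ w ↔ Respects w p := by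
  refine ⟨fun h => (respects_orbitRel (Subgroup.mem_zpowers p)).mono h, fun h => ?_⟩
  rw [cycles, Subgroup.zpowers_eq_closure]
  exact orbitRel_closure_le (by simpa using h)

theorem respects_cycles (p : Perm α) : Respects (cycles p) p := cycles_le.1 le_rfl

/-- The number of classes of a partition. -/
noncomputable def classCount (s : Setoid α) : ℕ := Nat.card (Quotient s)

theorem classCount_cycles_inv (p : Perm α) :
    classCount (cycles p⁻¹) = classCount (cycles p) := by
  rw [cycles, Subgroup.zpowers_inv]

variable [Finite α]

theorem classCount_anti {s t : Setoid α} (h : s ≤ t) : classCount t ≤ classCount s :=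
  Nat.card_le_card_of_surjective (Quotient.map' id fun _ _ hxy => h hxy) (by
    rintro ⟨x⟩
    exact ⟨Quotient.mk s x, rfl⟩)

theorem classCount_lt {s t : Setoid α} (h : s ≤ t) {a b : α} (hs : ¬ s a b) (ht : t a b) :
    classCount t < classCount s := by
  let f : Quotient s → Quotient t := Quotient.map' id fun _ _ hxy => h hxy
  have hf : Function.Surjective f := by
    rintro ⟨x⟩
    exact ⟨Quotient.mk s x, rfl⟩
  refine lt_of_le_of_ne (classCount_anti h) fun heq => hs ?_
  have hinj := (Nat.bijective_iff_surjective_and_card f).2 ⟨hf, heq.symm⟩ |>.1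
  exact Quotient.exact (hinj (Quotient.sound ht : f (Quotient.mk s a) = f (Quotient.mk s b)))

/-- Merging two classes of `u` lowers the number of classes by at most one. -/
theorem classCount_le_succ {u v : Setoid α} {a b : α}
    (h : ∀ w : Setoid α, u ≤ w → w a b → v ≤ w) : classCount u ≤ classCount v + 1 := by
  classical
  let f : α → Quotient u := fun x => if u x a then Quotient.mk u b else Quotient.mk u x
  have hvf : v ≤ Setoid.ker f := by
    refine h _ (fun x y hxy => ?_) ?_
    · have : u x a ↔ u y a := ⟨u.trans (u.symm hxy), u.trans hxy⟩
      by_cases hy : u y a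
      · simp [f, this, hy]
      · simpa [Setoid.ker, Function.onFun, f, this, hy] using Quotient.sound hxy
    · simp [f]
  let g : Quotient u → Option (Quotient v) := fun q =>
    if q = Quotient.mk u a then none else some (Quotient.mk v q.out)
  have hg : Function.Injective g := by
    intro q r hqr
    by_cases hq : q = Quotient.mk u a <;> by_cases hr : r = Quotient.mk u a
    · rw [hq, hr]
    · simp [g, hq, hr] at hqr
    · simp [g, hq, hr] at hqr
    · have hv : v q.out r.out := Quotient.exact (by simpa [g, hq, hr] using hqr)
      have hq' : ¬ u q.out a := fun h' => hq (by rw [← Quotient.out_eq q]; exact Quotient.sound h')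
      have hr' : ¬ u r.out a := fun h' => hr (by rw [← Quotient.out_eq r]; exact Quotient.sound h')
      have : f q.out = f r.out := hvf hv
      simpa [f, hq', hr'] using this
  have := Nat.card_le_card_of_injective g hg
  rwa [Finite.card_option] at this

theorem classCount_cycles_conj_le (g p : Perm α) :
    classCount (cycles (g * p * g⁻¹)) ≤ classCount (cycles p) := by
  have h : cycles p ≤ (cycles (g * p * g⁻¹)).comap g := by
    refine cycles_le.2 fun x => ?_
    simpa [Setoid.comap_rel] using respects_cycles (g * p * g⁻¹) (g x)
  refine Nat.card_le_card_of_surjective (Quotient.map' g fun _ _ hxy => h hxy) ?_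
  rintro ⟨x⟩
  exact ⟨Quotient.mk _ (g⁻¹ x), congrArg (Quotient.mk _) (g.apply_symm_apply x)⟩

theorem cycles_swap_mul_rel [DecidableEq α] {p : Perm α} {a b : α} (h : ¬ cycles p a b) :
    cycles (swap a b * p) a b := by
  by_contra hab
  have hp := respects_cycles p
  have step : ∀ n : ℕ, cycles p a ((p ^ n) a) ∧ cycles (swap a b * p) a ((p ^ n) a) ∧
      (p ^ (n + 1)) a ≠ a := by
    have aux : ∀ y, cycles p a y → cycles (swap a b * p) a y → p y ≠ a ∧ p y ≠ b := by
      intro y h₁ h₂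
      refine ⟨fun hy => hab ?_, fun hy => h ?_⟩
      · have := (cycles _).trans h₂ (respects_cycles (swap a b * p) y)
        simpa [hy] using this
      · simpa [hy] using (cycles p).trans h₁ (hp y)
    intro n
    induction n with
    | zero =>
      have h₁ := (cycles p).refl a
      have h₂ := (cycles (swap a b * p)).refl a
      exact ⟨h₁, h₂, by simpa using (aux a h₁ h₂).1⟩
    | succ n ih =>
      obtain ⟨h₁, h₂, -⟩ := ih
      obtain ⟨hy₁, hy₂⟩ := aux _ h₁ h₂
      have e : (p ^ (n + 1)) a = p ((p ^ n) a) := by rw [pow_succ']; rfl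
      have h₁' : cycles p a ((p ^ (n + 1)) a) := by
        rw [e]
        exact (cycles p).trans h₁ (hp _)
      have h₂' : cycles (swap a b * p) a ((p ^ (n + 1)) a) := by
        have := (cycles _).trans h₂ (respects_cycles (swap a b * p) _)
        rwa [Perm.mul_apply, swap_apply_of_ne_of_ne hy₁ hy₂, ← e] at this
      refine ⟨h₁', h₂', ?_⟩
      rw [pow_succ' p (n + 1)]
      exact (aux _ h₁' h₂').1
  have hpos := orderOf_pos p
  have := (step (orderOf p - 1)).2.2
  rw [Nat.sub_add_cancel hpos, pow_orderOf_eq_one] at this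
  exact this rfl

theorem classCount_cycles_swap_mul_lt [DecidableEq α] {p : Perm α} {a b : α}
    (h : ¬ cycles p a b) : classCount (cycles (swap a b * p)) < classCount (cycles p) := by
  have hab := cycles_swap_mul_rel h
  refine classCount_lt (cycles_le.2 ?_) h hab
  simpa using (Respects.swap hab).mul (respects_cycles (swap a b * p))

theorem classCount_cycles_swap_mul_le [DecidableEq α] (p : Perm α) (a b : α) :
    classCount (cycles (swap a b * p)) ≤ classCount (cycles p) + 1 :=
  classCount_le_succ (a := a) (b := b) fun w hw hab => cycles_le.2 (by
    simpa using (Respects.swap hab).mul (cycles_le.1 hw))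

/-- Genus-type inequality: passing from `q` to `p * q` while enlarging the partition `s`,
which is preserved by `q`, by the cycles of `p` does not decrease the genus. -/
theorem classCount_cycles_add_le (s : Setoid α) {q : Perm α} (hq : Respects s q) (p : Perm α) :
    classCount (cycles p) + classCount (cycles (p * q)) + 2 * classCount s ≤
      Nat.card α + classCount (cycles q) + 2 * classCount (s ⊔ cycles p) := by
  classical
  have := Fintype.ofFinite α
  induction hn : p.support.card using Nat.strong_induction_on generalizing p with
  | _ n ih =>
  by_cases hp : p = 1
  · subst hp
    have h₁ : cycles (1 : Perm α) ≤ s := cycles_le.2 (Respects.one s)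
    have h₂ : classCount (cycles (1 : Perm α)) ≤ Nat.card α :=
      Nat.card_le_card_of_surjective (Quotient.mk _) Quotient.mk_surjective
    rw [sup_eq_left.2 h₁, one_mul]
    omega
  obtain ⟨x, hx⟩ : ∃ x, p x ≠ x := by
    by_contra! h
    exact hp (Perm.ext h)
  set t := swap x (p x) with ht
  obtain ⟨p', hp'⟩ : ∃ p', p' = t * p := ⟨_, rfl⟩
  have hpt : p = t * p' := by simp [hp', t]
  have hfix : p' x = x := by simp [hp', t]
  have hlt : p'.support.card < n := by
    rw [← hn, hp']
    exact Perm.card_support_swap_mul hx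
  have IH := ih _ hlt p' rfl
  have hdiff : ¬ cycles p' x (p x) := by
    intro h
    rcases h with ⟨⟨g, hg⟩, hgx⟩
    obtain ⟨m, rfl⟩ := Subgroup.mem_zpowers_iff.1 hg
    have hm : (p' ^ m) x = x := Perm.zpow_apply_eq_self_of_apply_eq_self hfix m
    have : (p' ^ m) (p x) = x := hgx
    exact hx ((p' ^ m).injective (this.trans hm.symm))
  have h₁ := classCount_cycles_swap_mul_lt hdiff
  rw [← ht, ← hpt] at h₁
  have hsup : ∀ w : Setoid α, s ⊔ cycles p' ≤ w → w x (p x) → s ⊔ cycles p ≤ w := by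
    intro w hw hab
    refine sup_le (le_sup_left.trans hw) (cycles_le.2 ?_)
    rw [hpt]
    exact (Respects.swap hab).mul (cycles_le.1 (le_sup_right.trans hw))
  have hpq : p * q = t * (p' * q) := by rw [hpt, mul_assoc]
  by_cases hab : (s ⊔ cycles p') x (p x)
  · have h₂ := classCount_anti (hsup _ le_rfl hab)
    have h₃ := classCount_cycles_swap_mul_le (p' * q) x (p x)
    rw [← ht, ← hpq] at h₃
    omega
  · have h₂ := classCount_le_succ hsup
    have hle : cycles (p' * q) ≤ s ⊔ cycles p' :=
      cycles_le.2 ((cycles_le.1 le_sup_right).mul (hq.mono le_sup_left))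
    have h₃ := classCount_cycles_swap_mul_lt fun h => hab (hle h)
    rw [← ht, ← hpq] at h₃
    omega

/-- The Euler characteristic bound for a closed chain `b 0, …, b m` of permutations. -/
theorem exists_sum_classCount_cycles_le (b : ℕ → Perm α) (m : ℕ) :
    ∃ s : Setoid α, (∀ i ≤ m, Respects s ((b i)⁻¹ * b 0)) ∧
      ∑ i ∈ Finset.range m, classCount (cycles ((b (i + 1))⁻¹ * b i)) +
        classCount (cycles ((b m)⁻¹ * b 0)) + Nat.card α ≤
      m * Nat.card α + 2 * classCount s := by
  induction m with
  | zero =>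
    refine ⟨⊥, fun i hi => ?_, ?_⟩
    · rw [Nat.le_zero.1 hi, inv_mul_cancel]
      exact Respects.one _
    · have h₁ := classCount_anti (bot_le : (⊥ : Setoid α) ≤ cycles ((b 0)⁻¹ * b 0))
      have h₂ : classCount (⊥ : Setoid α) = Nat.card α :=
        (Nat.card_congr (Equiv.ofBijective (Quotient.mk ⊥)
          ⟨fun _ _ h => Quotient.exact h, Quotient.mk_surjective⟩)).symm
      simp only [Finset.range_zero, Finset.sum_empty]
      omega
  | succ m ih =>
    obtain ⟨s, hs, hle⟩ := ih
    refine ⟨s ⊔ cycles ((b (m + 1))⁻¹ * b m), fun i hi => ?_, ?_⟩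
    · rcases Nat.le_succ_iff.1 hi with hi | rfl
      · exact (hs i hi).mono le_sup_left
      · have := (cycles_le.1 (le_sup_right : _ ≤ s ⊔ cycles ((b (m + 1))⁻¹ * b m))).mul
          ((hs m le_rfl).mono le_sup_left)
        rwa [show (b (m + 1))⁻¹ * b m * ((b m)⁻¹ * b 0) = (b (m + 1))⁻¹ * b 0 by group] at this
    · have h := classCount_cycles_add_le s (hs m le_rfl) ((b (m + 1))⁻¹ * b m)
      rw [show (b (m + 1))⁻¹ * b m * ((b m)⁻¹ * b 0) = (b (m + 1))⁻¹ * b 0 by group] at h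
      rw [Finset.sum_range_succ, Nat.succ_mul]
      omega

theorem faceCount_eq {k D : ℕ} (σ : Fin (D + 1) → Perm (Fin k)) :
    faceCount σ = bubbleFaceCount σ + ∑ c : Fin D, cycleCount (σ 0 * (σ c.succ)⁻¹) := by
  simp only [faceCount, bubbleFaceCount, Finset.sum_filter, Fintype.sum_prod_type,
    Fin.sum_univ_succ (n := D)]
  simp [add_comm]

theorem sum_classCount_cycles_le {k : ℕ} (b : ℕ → Perm (Fin k)) (g : Perm (Fin k)) (m : ℕ)
    (A B : Setoid (Fin k)) (hB : ∀ i ≤ m, Respects B ((b 0)⁻¹ * b i))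
    (hBmin : ∀ w, (∀ i ≤ m, Respects w ((b 0)⁻¹ * b i)) → B ≤ w)
    (hAmin : ∀ w, (∀ i ≤ m, Respects w (g⁻¹ * b i)) → A ≤ w) :
    ∑ i ∈ Finset.range (m + 1), classCount (cycles (g⁻¹ * b i)) + m * classCount B ≤
      m * k + (m + 1) * classCount A := by
  have hBij : ∀ i ≤ m, ∀ j ≤ m, Respects B ((b i)⁻¹ * b j) := fun i hi j hj => by
    simpa [mul_assoc] using (hB i hi).inv.mul (hB j hj)
  have pair : ∀ i ≤ m, ∀ j ≤ m, classCount (cycles (g⁻¹ * b i)) +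
      classCount (cycles (g⁻¹ * b j)) + 2 * classCount B ≤
        k + classCount (cycles ((b i)⁻¹ * b j)) + 2 * classCount A := by
    intro i hi j hj
    have h := classCount_cycles_add_le B (hBij i hi j hj) (g⁻¹ * b i)
    rw [show g⁻¹ * b i * ((b i)⁻¹ * b j) = g⁻¹ * b j by group, Nat.card_fin] at h
    have hA : A ≤ B ⊔ cycles (g⁻¹ * b i) := hAmin _ fun l hl => by
      have := (cycles_le.1 (le_sup_right : _ ≤ B ⊔ cycles (g⁻¹ * b i))).mul
        ((hBij i hi l hl).mono le_sup_left)
      rwa [show g⁻¹ * b i * ((b i)⁻¹ * b l) = g⁻¹ * b l by group] at this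
    have := classCount_anti hA
    omega
  obtain ⟨s, hs, hle⟩ := exists_sum_classCount_cycles_le b m
  have hBs : classCount s ≤ classCount B :=
    classCount_anti (hBmin s fun i hi => by simpa using (hs i hi).inv)
  have hsum := Finset.sum_le_sum (s := Finset.range m) fun i hi =>
    pair (i + 1) (Finset.mem_range.1 hi) i (Finset.mem_range.1 hi).le
  have hlast := pair m le_rfl 0 (Nat.zero_le m)
  simp only [Finset.sum_add_distrib, Finset.sum_const, Finset.card_range, smul_eq_mul] at hsum
  have h₀ := Finset.sum_range_succ (fun i => classCount (cycles (g⁻¹ * b i))) m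
  have h₁ := Finset.sum_range_succ' (fun i => classCount (cycles (g⁻¹ * b i))) m
  rw [Nat.card_fin] at hle
  nlinarith

end ColoredGraph

/-- Master bound on the `N`-exponent: for any `(D+1)`-tuple of permutations,
`−(D−1)·k + F(σ) − F_D(σ_D) ≤ D·C(σ) − (D−1)·C_D(σ_D)`. -/
theorem exponent_bound (k D : ℕ) (hk : 1 ≤ k) (hD : 2 ≤ D)
    (σ : Fin (D + 1) → Equiv.Perm (Fin k)) :
    -(D - 1 : ℤ) * k + (faceCount σ : ℤ) - (bubbleFaceCount σ : ℤ) ≤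
      (D : ℤ) * compCount σ - (D - 1 : ℤ) * bubbleCompCount σ := by
  obtain ⟨m, rfl⟩ : ∃ m, D = m + 1 := ⟨D - 1, by omega⟩
  let b : ℕ → Equiv.Perm (Fin k) := fun i => σ (Fin.ofNat (m + 1 + 1) (i + 1))
  have hb0 : b 0 = σ 1 := rfl
  have hb : ∀ c : Fin (m + 1 + 1), c ≠ 0 → ∃ i ≤ m, b i = σ c := fun c hc => by
    have hpos : 0 < (c : ℕ) := Nat.pos_of_ne_zero fun h => hc (Fin.ext h)
    refine ⟨c - 1, by omega, congrArg σ (Fin.ext ?_)⟩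
    simp [Nat.sub_add_cancel hpos]
  have main := ColoredGraph.sum_classCount_cycles_le b (σ 0) m
    (MulAction.orbitRel (Subgroup.closure
      {g : Equiv.Perm (Fin k) | ∃ c : Fin (m + 1 + 1), c ≠ 0 ∧ g = (σ 0)⁻¹ * σ c}) (Fin k))
    (MulAction.orbitRel (Subgroup.closure
      {g : Equiv.Perm (Fin k) | ∃ c : Fin (m + 1 + 1), 1 < c ∧ g = (σ 1)⁻¹ * σ c}) (Fin k))
    (fun i hi => by
      rw [hb0]
      rcases Nat.eq_zero_or_pos i with rfl | hpos
      · rw [hb0, inv_mul_cancel]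
        exact ColoredGraph.Respects.one _
      · refine ColoredGraph.respects_orbitRel (Subgroup.subset_closure ⟨_, ?_, rfl⟩)
        rw [Fin.lt_def]
        simp [Nat.mod_eq_of_lt (show i + 1 < m + 1 + 1 by omega), hpos])
    (fun w hw => ColoredGraph.orbitRel_closure_le (by
      rintro _ ⟨c, hc, rfl⟩
      obtain ⟨i, hi, hic⟩ := hb c (Fin.pos_iff_ne_zero.1 (lt_of_le_of_lt (Fin.zero_le _) hc))
      rw [← hic, ← hb0]
      exact hw i hi))
    (fun w hw => ColoredGraph.orbitRel_closure_le (by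
      rintro _ ⟨c, hc, rfl⟩
      obtain ⟨i, hi, hic⟩ := hb c hc
      rw [← hic]
      exact hw i hi))
  have hface : ∑ c : Fin (m + 1), cycleCount (σ 0 * (σ c.succ)⁻¹) ≤
      ∑ i ∈ Finset.range (m + 1),
        ColoredGraph.classCount (ColoredGraph.cycles ((σ 0)⁻¹ * b i)) := by
    rw [Finset.sum_range]
    refine Finset.sum_le_sum fun c _ => ?_
    have hc : b c = σ c.succ := congrArg σ (Fin.ext (by simp; omega))
    have h := ColoredGraph.classCount_cycles_conj_le (σ 0) ((σ 0)⁻¹ * b c)⁻¹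
    rw [ColoredGraph.classCount_cycles_inv] at h
    refine le_trans (le_of_eq ?_) h
    rw [show σ 0 * ((σ 0)⁻¹ * b c)⁻¹ * (σ 0)⁻¹ = σ 0 * (σ c.succ)⁻¹ by rw [hc]; group]
    rfl
  have hbound : ∑ c : Fin (m + 1), cycleCount (σ 0 * (σ c.succ)⁻¹) + m * bubbleCompCount σ ≤
      m * k + (m + 1) * compCount σ := (Nat.add_le_add_right hface _).trans main
  rw [ColoredGraph.faceCount_eq]
  zify at hbound
  push_cast
  linarith
end

section
/- Quenched terms scale at most like N: for D ≥ 2 and any (D+1)-tuple σ of permutations of {1,…,k} whose D-bubble is connected, i.e. C_D(σ_D) = 1 (as required in the expansion of the quenched free energy ⟨ln Z⟩), the whole graph is connected, C(σ) = 1, and the N-exponent satisfies −(D−1)·k + F(σ) − F_D(σ_D) ≤ 1. -/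
/-- If the orbits of a smaller group form a single class, so do those of a larger one. -/
theorem card_orbits_eq_one_of_le {G X : Type*} [Group G] [MulAction G X] {H K : Subgroup G}
    (hHK : H ≤ K) (h : Nat.card (MulAction.orbitRel.Quotient H X) = 1) :
    Nat.card (MulAction.orbitRel.Quotient K X) = 1 := by
  rw [Nat.card_eq_one_iff_unique] at h ⊢
  obtain ⟨hsub, ⟨q⟩⟩ := h
  have hpre := (MulAction.pretransitive_iff_subsingleton_quotient H X).2 hsub
  refine ⟨(MulAction.pretransitive_iff_subsingleton_quotient K X).1 ⟨fun x y => ?_⟩,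
    Quotient.inductionOn q fun x => ⟨Quotient.mk _ x⟩⟩
  obtain ⟨g, hg⟩ := hpre.exists_smul_eq x y
  exact ⟨⟨g, hHK g.2⟩, hg⟩

/-- A connected bubble forces the whole colored graph to be connected. -/
theorem compCount_eq_one_of_bubbleCompCount_eq_one {k D : ℕ} (hD : 1 ≤ D)
    (σ : Fin (D + 1) → Equiv.Perm (Fin k)) (hbub : bubbleCompCount σ = 1) :
    compCount σ = 1 := by
  refine card_orbits_eq_one_of_le ((Subgroup.closure_le _).2 ?_) hbub
  rintro g ⟨c, hc, rfl⟩
  have h1 : (1 : Fin (D + 1)) ≠ 0 := by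
    obtain ⟨n, rfl⟩ := Nat.exists_eq_add_of_le' hD
    exact one_ne_zero
  have hc0 : c ≠ 0 := ((Fin.zero_le 1).trans_lt hc).ne'
  have hmul : (σ 1)⁻¹ * σ c = ((σ 0)⁻¹ * σ 1)⁻¹ * ((σ 0)⁻¹ * σ c) := by group
  rw [hmul]
  exact mul_mem (inv_mem (Subgroup.subset_closure ⟨1, h1, rfl⟩))
    (Subgroup.subset_closure ⟨c, hc0, rfl⟩)

/-- The space of rational functions `f` with `f ∘ a = f ∘ b`. -/
def agreeingFunctions {X : Type*} (a b : Equiv.Perm X) : Submodule ℚ (X → ℚ) :=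
  LinearMap.eqLocus (LinearMap.funLeft ℚ ℚ a) (LinearMap.funLeft ℚ ℚ b)

theorem mem_agreeingFunctions {X : Type*} {a b : Equiv.Perm X} {f : X → ℚ} :
    f ∈ agreeingFunctions a b ↔ ∀ x, f (a x) = f (b x) :=
  funext_iff

theorem cycleCount_le_finrank_agreeingFunctions {k : ℕ} (a b : Equiv.Perm (Fin k)) :
    cycleCount (a * b⁻¹) ≤ Module.finrank ℚ (agreeingFunctions a b) := by
  classical
  let Q := MulAction.orbitRel.Quotient (Subgroup.zpowers (a * b⁻¹)) (Fin k)
  let q : Fin k → Q := Quotient.mk _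
  have : Fintype Q := Fintype.ofFinite Q
  have hinj : Function.Injective (LinearMap.funLeft ℚ ℚ q) :=
    LinearMap.funLeft_injective_of_surjective ℚ ℚ q Quotient.mk_surjective
  have hle : LinearMap.range (LinearMap.funLeft ℚ ℚ q) ≤ agreeingFunctions a b := by
    rintro _ ⟨φ, rfl⟩
    refine mem_agreeingFunctions.2 fun x => congrArg φ (Quotient.sound ?_)
    exact ⟨⟨a * b⁻¹, Subgroup.mem_zpowers _⟩, by simp [Subgroup.smul_def]⟩
  calc cycleCount (a * b⁻¹) = Module.finrank ℚ (Q → ℚ) := by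
        rw [Module.finrank_fintype_fun_eq_card, ← Nat.card_eq_fintype_card]; rfl
    _ = Module.finrank ℚ (LinearMap.range (LinearMap.funLeft ℚ ℚ q)) :=
        (LinearMap.finrank_range_of_inj hinj).symm
    _ ≤ _ := Submodule.finrank_mono hle

/-- Codimension is subadditive under finite intersections of subspaces. -/
theorem sum_finrank_add_finrank_le {K V ι : Type*} [DivisionRing K] [AddCommGroup V] [Module K V]
    [FiniteDimensional K V] (s : Finset ι) (W : ι → Submodule K V) :
    ∑ i ∈ s, Module.finrank K (W i) + Module.finrank K V ≤
      s.card * Module.finrank K V + Module.finrank K (s.inf W : Submodule K V) := by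
  classical
  induction s using Finset.induction_on with
  | empty => rw [Finset.inf_empty, finrank_top]; simp
  | insert i s hi ih =>
    rw [Finset.sum_insert hi, Finset.card_insert_of_notMem hi, Finset.inf_insert, add_mul, one_mul]
    have hdim := Submodule.finrank_sup_add_finrank_inf_eq (W i) (s.inf W)
    have hsup := Submodule.finrank_le (W i ⊔ s.inf W)
    omega

/-- On a connected colored graph, a function on black vertices that agrees along all colors
is constant. -/
theorem finrank_inf_agreeingFunctions_le_one {k D : ℕ}
    (σ : Fin (D + 1) → Equiv.Perm (Fin k)) (hconn : compCount σ = 1) :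
    Module.finrank ℚ ((Finset.univ.filter (· ≠ 0)).inf fun c => agreeingFunctions (σ 0) (σ c) :
      Submodule ℚ (Fin k → ℚ)) ≤ 1 := by
  rw [compCount, Nat.card_eq_one_iff_unique] at hconn
  have hpre := (MulAction.pretransitive_iff_subsingleton_quotient _ _).2 hconn.1
  refine (Submodule.finrank_mono (t := Submodule.span ℚ {fun _ => 1}) ?_).trans
    ((finrank_span_le_card _).trans (by simp))
  intro f hf
  rw [Submodule.mem_finsetInf] at hf
  have hagree : ∀ c, c ≠ 0 → ∀ x, f (σ 0 x) = f (σ c x) := fun c hc =>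
    mem_agreeingFunctions.1 (hf c (by simpa using hc))
  have hinv : ∀ g ∈ Subgroup.closure
      {g : Equiv.Perm (Fin k) | ∃ c : Fin (D + 1), c ≠ 0 ∧ g = (σ 0)⁻¹ * σ c},
      ∀ x, f (σ 0 (g x)) = f (σ 0 x) := by
    intro g hg
    induction hg using Subgroup.closure_induction with
    | mem g hg =>
      obtain ⟨c, hc, rfl⟩ := hg
      intro x
      simp [hagree c hc x]
    | one => simp
    | mul g h _ _ hg hh => intro x; rw [Equiv.Perm.mul_apply, hg, hh]
    | inv g _ hg => intro x; simpa using (hg (g⁻¹ x)).symm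
  have hconst : ∀ x y, f x = f y := by
    intro x y
    obtain ⟨g, hg⟩ := hpre.exists_smul_eq ((σ 0)⁻¹ x) ((σ 0)⁻¹ y)
    have hgx := hinv g g.2 ((σ 0)⁻¹ x)
    have hg' : (g : Equiv.Perm (Fin k)) ((σ 0)⁻¹ x) = (σ 0)⁻¹ y := hg
    rw [hg'] at hgx
    simpa using hgx.symm
  obtain ⟨q⟩ := hconn.2
  obtain ⟨x₀, -⟩ := Quotient.exists_rep q
  exact Submodule.mem_span_singleton.2 ⟨f x₀, funext fun x => by simpa using hconst x₀ x⟩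

/-- The faces of the graph are those of the bubble and those containing color `0`. -/
theorem faceCount_eq_bubbleFaceCount_add {k D : ℕ} (σ : Fin (D + 1) → Equiv.Perm (Fin k)) :
    faceCount σ = bubbleFaceCount σ +
      ∑ c ∈ Finset.univ.filter (· ≠ 0), cycleCount (σ 0 * (σ c)⁻¹) := by
  rw [faceCount, bubbleFaceCount,
    ← Finset.sum_filter_add_sum_filter_not _ (fun p : Fin (D + 1) × Fin (D + 1) => 0 < p.1)]
  congr 1
  · rw [Finset.filter_filter]
    simp only [and_comm]
  · refine Finset.sum_nbij' Prod.snd (fun c => (0, c)) ?_ ?_ ?_ ?_ ?_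
    · rintro ⟨a, b⟩ hab
      simpa using ((Fin.zero_le a).trans_lt (Finset.mem_filter.1 (Finset.mem_filter.1 hab).1).2).ne'
    all_goals simp +contextual [Fin.pos_iff_ne_zero, Prod.ext_iff]

/-- Quenched terms scale at most like `N`: if the `D`-bubble of `σ` is connected,
then the whole graph is connected and the `N`-exponent satisfies
`−(D−1)·k + F(σ) − F_D(σ_D) ≤ 1`. -/
theorem quenched_exponent_bound (k D : ℕ) (hk : 1 ≤ k) (hD : 2 ≤ D)
    (σ : Fin (D + 1) → Equiv.Perm (Fin k)) (hbub : bubbleCompCount σ = 1) :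
    compCount σ = 1 ∧
      -(D - 1 : ℤ) * k + (faceCount σ : ℤ) - (bubbleFaceCount σ : ℤ) ≤ 1 := by
  have hconn := compCount_eq_one_of_bubbleCompCount_eq_one (by omega) σ hbub
  refine ⟨hconn, ?_⟩
  have hle := Finset.sum_le_sum fun c (_ : c ∈ Finset.univ.filter (· ≠ (0 : Fin (D + 1)))) =>
    cycleCount_le_finrank_agreeingFunctions (σ 0) (σ c)
  have hdim := sum_finrank_add_finrank_le (Finset.univ.filter (· ≠ (0 : Fin (D + 1))))
    fun c => agreeingFunctions (σ 0) (σ c)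
  have hone := finrank_inf_agreeingFunctions_le_one σ hconn
  have hcard : (Finset.univ.filter (· ≠ (0 : Fin (D + 1)))).card = D := by
    simp [Finset.filter_ne']
  rw [hcard, Module.finrank_fin_fun] at hdim
  have hbound : ∑ c ∈ Finset.univ.filter (· ≠ 0), cycleCount (σ 0 * (σ c)⁻¹) + k ≤ D * k + 1 := by
    omega
  rw [faceCount_eq_bubbleFaceCount_add]
  zify at hbound
  push_cast
  linarith
end
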